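/- For every sentence C, the colored complete homogeneous function expands positively into the colored immaculate basis as H_C = Σ_J K_{J,C} 𝔖_J, where the sum runs over all sentences J with |J| = |C| and K_{J,C} is the number of colored immaculate tableaux of shape J and type C. -/

import Mathlib

open scoped BigOperators

namespace ColoredImm

variable {A : Type*}

/-- A *weak sentence* over the alphabet `A`: a finite list of words (words may be empty). -/
abbrev Sentence (A : Type*) := List (List A)

/-- A genuine *sentence*: all of its words are nonempty. -/
def IsSentence (I : Sentence A) : Prop := ∀ w ∈ I, w ≠ []

/-- The size `|I|` of a sentence: its total number of letters. -/
def size (I : Sentence A) : ℕ := (I.map List.length).sum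

/-- The word lengths `wℓ(I)` of a sentence. -/
def wl (I : Sentence A) : List ℕ := I.map List.length

/-- The flattening of a weak sentence: delete all empty words. -/
def flattenWS (I : Sentence A) : Sentence A := I.filter (fun w => !w.isEmpty)

/-- `Refines J I` means `J ⪯ I`: the sentence `I` can be obtained by concatenating
some adjacent words of `J` (so `J` is a refinement of `I`, and `I` a coarsening of `J`). -/
def Refines (J I : Sentence A) : Prop :=
  ∃ P : List (Sentence A), (∀ p ∈ P, p ≠ []) ∧ P.flatten = J ∧ P.map List.flatten = I

/-! ### Fillings and colored immaculate tableaux -/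

/-- An integer filling of a diagram, recorded row by row. -/
abbrev Filling := List (List ℕ)

/-- The entry of a filling at box `b = (row, column)` (0-indexed), with default `0`. -/
def entryAt (f : Filling) (b : ℕ × ℕ) : ℕ := (f.getD b.1 []).getD b.2 0

/-- `IsCIT I f`: `f` is a colored immaculate tableau of shape `I`; that is, `f` has the
same shape as the colored composition diagram of `I`, its entries are positive integers
weakly increasing left to right along each row, and the entries in the first column are
strictly increasing from top to bottom. -/
def IsCIT (I : Sentence A) (f : Filling) : Prop :=
  f.map List.length = I.map List.length ∧
  (∀ row ∈ f, row.Chain' (· ≤ ·)) ∧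
  (f.filterMap List.head?).Chain' (· < ·) ∧
  (∀ x ∈ f.flatten, 1 ≤ x)

/-- The colors (letters of `w`) of the boxes of one row whose entry (in `row`) is `v`,
read from left to right. -/
def rowWith (w : List A) (row : List ℕ) (v : ℕ) : List A :=
  ((w.zip row).filter (fun p => p.2 == v)).map Prod.fst

/-- The word of the type of a tableau at value `v`: the colors of all boxes with entry `v`,
read left to right, from the bottom row up to the top row. -/
def typeWord (I : Sentence A) (f : Filling) (v : ℕ) : List A :=
  (((I.zip f).reverse).map (fun p => rowWith p.1 p.2 v)).flatten

/-- `HasType I f B` : the tableau `f` (of shape `I`) has type the weak sentence `B`,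
i.e. for every positive integer `v`, the colors of the boxes of `f` containing `v`
(read left to right, bottom to top) form the `v`-th word of `B`. -/
def HasType (I : Sentence A) (f : Filling) (B : Sentence A) : Prop :=
  ∀ v, 1 ≤ v → typeWord I f v = B.getD (v - 1) []

/-- `K_{J,B}`: the number of colored immaculate tableaux of shape `J` and type `B`. -/
noncomputable def KJB (J B : Sentence A) : ℕ :=
  Set.ncard {f : Filling | IsCIT J f ∧ HasType J f B}

/-! ### Standardization -/

/-- The list of boxes of a filling. -/
def boxes (f : Filling) : List (ℕ × ℕ) :=
  ((List.range f.length).map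
    (fun r => (List.range (f.getD r []).length).map (fun j => (r, j)))).flatten

/-- `beforeB f b b'`: box `b` comes strictly before box `b'` in the type-reading order of `f`
(smaller entries first; among equal entries, lower rows first, and within a row left to right). -/
def beforeB (f : Filling) (b b' : ℕ × ℕ) : Bool :=
  entryAt f b < entryAt f b' ||
    (entryAt f b == entryAt f b' && (b'.1 < b.1 || (b.1 == b'.1 && b.2 < b'.2)))

/-- The standardization of a filling: each box is renumbered (starting from `1`)
according to its position in the type-reading order. -/
def stdFill (f : Filling) : Filling :=
  (List.range f.length).map (fun r =>
    (List.range (f.getD r []).length).map (fun j =>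
      1 + ((boxes f).filter (fun b' => beforeB f b' (r, j))).length))

/-- The number of boxes of a filling. -/
def nBoxes (f : Filling) : ℕ := f.flatten.length

/-- A filling of `n` boxes is standard when its entries are exactly `1, …, n`,
each appearing once. -/
def IsStandardF (f : Filling) : Prop := f.flatten.Perm (List.range' 1 (nBoxes f))

/-! ### Descents and the colored descent composition -/

/-- The (0-indexed) row containing the value `v` in a standard filling. -/
def rowOf (f : Filling) (v : ℕ) : ℕ := f.findIdx (fun row => row.contains v)

/-- The sorted list of descents of a standard filling: those `i` with `1 ≤ i ≤ n-1`
such that `i+1` lies in a strictly lower row than `i`. -/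
def descList (f : Filling) : List ℕ :=
  (List.range' 1 (nBoxes f - 1)).filter (fun i => decide (rowOf f i < rowOf f (i + 1)))

/-- The composition of `n` associated to a set of split positions `d_1 < … < d_k`:
`(d_1, d_2 - d_1, …, n - d_k)`. -/
def compOf (ds : List ℕ) (n : ℕ) : List ℕ :=
  List.zipWith (fun a b => b - a) (0 :: ds) (ds ++ [n])

/-- Split a word into a sentence according to a composition. -/
def splitByComp : List A → List ℕ → List (List A)
  | _, [] => []
  | w, a :: rest => w.take a :: splitByComp (w.drop a) rest

/-- The color of the box containing the value `v` in a standard filling of shape `I`. -/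
def colorOf [Inhabited A] (I : Sentence A) (f : Filling) (v : ℕ) : A :=
  (I.getD (rowOf f v) []).getD ((f.getD (rowOf f v) []).findIdx (fun x => x == v)) default

/-- The maximal word of the colored descent composition of a standard filling of shape `I`:
the colors of its boxes read in the order of their integer entries. -/
def readWord [Inhabited A] (I : Sentence A) (f : Filling) : List A :=
  (List.range (nBoxes f)).map (fun i => colorOf I f (i + 1))

/-- The colored descent composition `co_A(U)` of a standard colored immaculate tableau:
read the colors of the boxes in the order of their entries, starting a new word
immediately after each descent. -/
def coA [Inhabited A] (I : Sentence A) (f : Filling) : Sentence A :=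
  if nBoxes f = 0 then [] else splitByComp (readWord I f) (compOf (descList f) (nBoxes f))

/-- `L_{J,C}`: the number of standard colored immaculate tableaux of shape `J`
with colored descent composition `C`. -/
noncomputable def LJC [Inhabited A] (J C : Sentence A) : ℕ :=
  Set.ncard {f : Filling | IsCIT J f ∧ IsStandardF f ∧ coA J f = C}

/-! ### The colored quasisymmetric functions `QSym_A` -/

/-- A (normal form of a) monomial in the partially commutative variables `x_{a,i}`:
a pair consisting of the list of words `(w_1, …, w_m)` and the list of (strictly
increasing, positive) second indices `(j_1 < … < j_m)`, representing
`x_{w_1,j_1} ⋯ x_{w_m,j_m}`. -/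
abbrev Mono (A : Type*) := List (List A) × List ℕ

/-- A colored quasisymmetric "series": a formal linear combination of monomials,
recorded by its coefficient function.  `QSym_A` itself is the span of the colored
monomial functions `MQ I` inside this space. -/
abbrev QSymA (A : Type*) := Mono A → ℚ

/-- Validity of a monomial normal form: words and indices match up, the indices are
strictly increasing positive integers, and all words are nonempty. -/
def ValidMono (m : Mono A) : Prop :=
  m.1.length = m.2.length ∧ m.2.Chain' (· < ·) ∧ (∀ j ∈ m.2, 1 ≤ j) ∧ ∀ w ∈ m.1, w ≠ []

open Classical in
/-- The colored monomial quasisymmetric function `M_I`: the sum of all monomials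
`x_{w_1,j_1} ⋯ x_{w_m,j_m}` with `j_1 < … < j_m`, where `I = (w_1, …, w_m)`. -/
noncomputable def MQ (I : Sentence A) : QSymA A := fun m =>
  if m.1 = I ∧ ValidMono m then 1 else 0

/-- The largest entry of a filling. -/
def maxEntry (f : Filling) : ℕ := f.flatten.foldr max 0

/-- The monomial `x_T` of a colored immaculate tableau `T = f` of shape `I`:
for `T` of type `B = (u_1, …, u_j)` it is `x_{u_1,1} x_{u_2,2} ⋯ x_{u_j,j}`
(empty words are skipped). -/
def monoOf (I : Sentence A) (f : Filling) : Mono A :=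
  let vs := ((List.range (maxEntry f)).map (· + 1)).filter (fun v => !(typeWord I f v).isEmpty)
  (vs.map (typeWord I f), vs)

/-- The colored dual immaculate function `𝔖*_J = Σ_T x_T`, the sum of the monomials of all
colored immaculate tableaux `T` of shape `J` (its coefficient at a monomial `m` is the
number of such tableaux with `x_T = m`). -/
noncomputable def dualImm (J : Sentence A) : QSymA A := fun m =>
  (Set.ncard {f : Filling | IsCIT J f ∧ monoOf J f = m} : ℚ)

/-- The colored fundamental quasisymmetric function `F_I = Σ_{J ⪯ I} M_J`. -/
noncomputable def FQ (I : Sentence A) : QSymA A :=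
  ∑ᶠ J ∈ {J : Sentence A | Refines J I}, MQ J

/-! ### The colored immaculate descent graph -/

/-- Edges of the colored immaculate descent graph: a directed edge from `I` to `J` (`J ≠ I`)
whenever some standard colored immaculate tableau of shape `I` has colored descent
composition `J`. -/
def IsEdge [Inhabited A] (I J : Sentence A) : Prop := J ≠ I ∧ LJC I J ≠ 0

/-- Directed paths from `I` to `K` in the colored immaculate descent graph, recorded by
their (nonempty) lists of successive vertices; the path `[I]` is the empty path at `I`. -/
def PathsFromTo [Inhabited A] (I K : Sentence A) : Set (List (Sentence A)) :=
  {p | p.head? = some I ∧ p.getLast? = some K ∧ p.Chain' IsEdge}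

/-- The signed weight `(-1)^{ℓ(𝒫)} prod(𝒫)` of a directed path `𝒫`:
`ℓ(𝒫)` is its number of edges and `prod(𝒫)` the product of its edge weights `L_{I,J}`. -/
noncomputable def pathWeight [Inhabited A] (p : List (Sentence A)) : ℚ :=
  ((-1 : ℚ)) ^ (p.length - 1) * ((p.zip p.tail).map (fun e => (LJC e.1 e.2 : ℚ))).prod

/-- `L⁻¹_{I,K} = Σ_𝒫 (-1)^{ℓ(𝒫)} prod(𝒫)`, summed over all directed paths `𝒫`
from `I` to `K` in the colored immaculate descent graph. -/
noncomputable def Linv [Inhabited A] (I K : Sentence A) : ℚ :=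
  ∑ᶠ p ∈ PathsFromTo I K, pathWeight p

/-! ### The colored noncommutative symmetric functions `NSym_A` -/

/-- A formal series over the complete homogeneous basis `{H_I}` of `NSym_A`, recorded by its
coefficient function on (weak) sentences.  `NSym_A` itself consists of the finitely
supported elements supported on genuine sentences; see `InNSym`. -/
abbrev NSymA (A : Type*) := Sentence A → ℚ

/-- Membership in `NSym_A` proper: finitely supported, and supported on genuine sentences. -/
def InNSym (f : NSymA A) : Prop :=
  (Function.support f).Finite ∧ ∀ I, f I ≠ 0 → IsSentence I

open Classical in
/-- The colored complete homogeneous noncommutative symmetric function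
`H_I = H_{w_1} ⋯ H_{w_k}`. -/
noncomputable def Hd (I : Sentence A) : NSymA A := fun J => if J = I then 1 else 0

/-- `H_w` for a single word `w`, with `H_∅ = 1`. -/
noncomputable def Hw (w : List A) : NSymA A := if w.isEmpty then Hd [] else Hd [w]

/-- Multiplication in `NSym_A` (the concatenation product, extended to series):
`H_I · H_J = H_{I ⬝ J}`. -/
def mulN (f g : NSymA A) : NSymA A := fun I =>
  ∑ j ∈ Finset.range (I.length + 1), f (I.take j) * g (I.drop j)

/-- The duality pairing `⟨·,·⟩ : NSym_A × QSym_A → ℚ`, determined by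
`⟨H_I, M_J⟩ = δ_{I,J}`: the `M_I`-coefficient of a quasisymmetric function is its
coefficient on the monomial `x_{w_1,1} x_{w_2,2} ⋯ x_{w_k,k}`. -/
noncomputable def pairNQ (G : NSymA A) (F : QSymA A) : ℚ :=
  ∑ᶠ I ∈ {I : Sentence A | IsSentence I}, G I * F (I, List.range' 1 I.length)

/-- All ways of splitting each word of a list of words into a prefix and a suffix. -/
def splitsOf : List (List A) → List (List (List A) × List (List A))
  | [] => [([], [])]
  | w :: ws =>
      (((splitsOf ws).map (fun p =>
        (List.range (w.length + 1)).map (fun t => (w.take t :: p.1, w.drop t :: p.2))))).flatten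

/-- Restriction of a candidate monomial: keep only the nonempty words together with
their indices. -/
def restrictMono (ws : List (List A)) (js : List ℕ) : Mono A :=
  let ps := (ws.zip js).filter (fun p => !p.1.isEmpty)
  (ps.map Prod.fst, ps.map Prod.snd)

/-- The product of colored quasisymmetric series: the coefficient of a monomial in `F·G`
is the sum, over all ways of writing each of its words as a concatenation of a word of a
monomial of `F` (on the left) and a word of a monomial of `G` (on the right), of the
products of the corresponding coefficients. -/
def mulQ (F G : QSymA A) : QSymA A := fun m =>
  ((splitsOf m.1).map (fun p => F (restrictMono p.1 m.2) * G (restrictMono p.2 m.2))).sum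

/-- The right perp operator `M^⊸` of `M ∈ QSym_A`, the linear operator on `NSym_A`
determined by `⟨M^⊸(H), G⟩ = ⟨H, G·M⟩`; explicitly, for the dual bases `{M_I}` and `{H_I}`,
`M^⊸(H) = Σ_I ⟨H, M_I · M⟩ H_I`. -/
noncomputable def rperp (M : QSymA A) (H : NSymA A) : NSymA A :=
  ∑ᶠ I ∈ {I : Sentence A | IsSentence I}, pairNQ H (mulQ (MQ I) M) • Hd I

/-- The colored noncommutative Bernstein operator
`𝔹_v = Σ_u Σ_{Q : w(Q^r) = u} (-1)^{ℓ(Q)} H_{v·u} · (Σ_{S ⪰ Q} M_S^⊸)`,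
where `Q` runs over all sentences, `u = w(Q^r)` is the concatenation of the words of `Q`
in reverse order, and `S` runs over all coarsenings of `Q`. -/
noncomputable def Bern (v : List A) (f : NSymA A) : NSymA A :=
  ∑ᶠ Q ∈ {Q : Sentence A | IsSentence Q},
    ((-1 : ℚ)) ^ Q.length •
      mulN (Hw (v ++ Q.reverse.flatten))
        (∑ᶠ S ∈ {S : Sentence A | Refines Q S}, rperp (MQ S) f)

/-- The colored immaculate function `𝔖_J = 𝔹_{v_1} 𝔹_{v_2} ⋯ 𝔹_{v_h}(1)`. -/
noncomputable def ImmS (J : Sentence A) : NSymA A := J.foldr Bern (Hd [])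

/-- The colored ribbon function `R_I = Σ_{J ⪰ I} (-1)^{ℓ(J) - ℓ(I)} H_J`. -/
noncomputable def Rib (I : Sentence A) : NSymA A :=
  ∑ᶠ J ∈ {J : Sentence A | Refines I J}, ((-1 : ℚ)) ^ (I.length - J.length) • Hd J

/-- The Pieri relation `J ⊂_w K` for a sentence `J = (v_1, …, v_h)` and a word `w`:
`K = (u_1, …, u_g)` with `h ≤ g ≤ h+1` (setting `v_{h+1} = ∅`) and `u_j = v_j · q_j`
for words `q_j` (possibly empty) whose reversed concatenation `q_g ⋯ q_1` equals `w`. -/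
def PieriRel (J : Sentence A) (w : List A) (K : Sentence A) : Prop :=
  J.length ≤ K.length ∧ K.length ≤ J.length + 1 ∧
  ∃ q : List (List A), q.length = K.length ∧ q.reverse.flatten = w ∧
    ∀ j < K.length, K.getD j [] = J.getD j [] ++ q.getD j []

/-- Right containment of a weak sentence `K` in `J`: same length, and each word of `K` is a
suffix of the corresponding word of `J`. -/
def RightContained (K J : Sentence A) : Prop :=
  K.length = J.length ∧ ∀ i < J.length, (K.getD i []).IsSuffix (J.getD i [])

/-- The weak sentence `J/_R K`: remove each word of `K` from the right end of the
corresponding word of `J`. -/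
def rightQuot (J K : Sentence A) : Sentence A :=
  List.zipWith (fun v u => v.take (v.length - u.length)) J K

/-- Left containment `J ⊆_L I`: `ℓ(J) ≤ ℓ(I)` and each word of `J` is a prefix of the
corresponding word of `I`. -/
def LeftContained (J I : Sentence A) : Prop :=
  J.length ≤ I.length ∧ ∀ i < J.length, (J.getD i []).IsPrefix (I.getD i [])

/-- A skew colored immaculate tableau of shape `I/J`: a filling of the active boxes
(the `i`-th row keeps the last `|w_i| - |v_i|` boxes) with positive integers, rows weakly
increasing left to right, and the entries in the (active part of the) first column of `I`
strictly increasing top to bottom. -/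
def IsSkewCIT (I J : Sentence A) (f : Filling) : Prop :=
  f.map List.length =
    (List.range I.length).map (fun i => (I.getD i []).length - (J.getD i []).length) ∧
  (∀ row ∈ f, row.Chain' (· ≤ ·)) ∧
  ((List.range I.length).filterMap
    (fun i => if (J.getD i []).length = 0 then (f.getD i []).head? else none)).Chain' (· < ·) ∧
  (∀ x ∈ f.flatten, 1 ≤ x)

/-- The word of the type of a skew tableau at value `v`: the colors of the active boxes with
entry `v`, read left to right, bottom to top. -/
def skewTypeWord (I J : Sentence A) (f : Filling) (v : ℕ) : List A :=
  (((List.range I.length).reverse).map (fun i =>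
    rowWith ((I.getD i []).drop (J.getD i []).length) (f.getD i []) v)).flatten

/-- `SkewHasType I J f K` : the skew tableau `f` of shape `I/J` has type `K`. -/
def SkewHasType (I J : Sentence A) (f : Filling) (K : Sentence A) : Prop :=
  ∀ v, 1 ≤ v → skewTypeWord I J f v = K.getD (v - 1) []

/-! ### The complement involution `ψ` and the row-strict functions -/

/-- The complement `I^c` of a sentence: the unique sentence with the same maximal word
that splits exactly where `I` does not. -/
def complSent (I : Sentence A) : Sentence A :=
  let w := I.flatten
  let n := w.length
  if n = 0 then []
  else
    let splits := (((wl I).scanl (· + ·) 0).drop 1).dropLast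
    let csplits := (List.range' 1 (n - 1)).filter (fun i => !(splits.contains i))
    splitByComp w (compOf csplits n)

/-- The `M_I`-coefficient of a colored quasisymmetric function. -/
noncomputable def coeffM (G : QSymA A) (I : Sentence A) : ℚ := G (I, List.range' 1 I.length)

/-- The image of `M_I` under `ψ`, via `M_I = Σ_{J ⪯ I} (-1)^{ℓ(J)-ℓ(I)} F_J` and
`ψ(F_J) = F_{J^c}`. -/
noncomputable def psiM (I : Sentence A) : QSymA A :=
  ∑ᶠ J ∈ {J : Sentence A | Refines J I}, ((-1 : ℚ)) ^ (J.length - I.length) • FQ (complSent J)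

/-- The linear involution `ψ` of `QSym_A`, determined by `ψ(F_I) = F_{I^c}`. -/
noncomputable def psiQ (G : QSymA A) : QSymA A :=
  ∑ᶠ I ∈ {I : Sentence A | IsSentence I}, coeffM G I • psiM I

/-- A colored row-strict immaculate tableau of shape `I`: entries strictly increase left to
right along each row and weakly increase top to bottom down the first column. -/
def IsCRSIT (I : Sentence A) (f : Filling) : Prop :=
  f.map List.length = I.map List.length ∧
  (∀ row ∈ f, row.Chain' (· < ·)) ∧
  (f.filterMap List.head?).Chain' (· ≤ ·) ∧
  (∀ x ∈ f.flatten, 1 ≤ x)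

/-- The word of the type of a row-strict tableau at value `v`: the colors of the boxes with
entry `v`, read left to right, top to bottom. -/
def rsTypeWord (I : Sentence A) (f : Filling) (v : ℕ) : List A :=
  ((I.zip f).map (fun p => rowWith p.1 p.2 v)).flatten

/-- The monomial `x_T` of a colored row-strict immaculate tableau. -/
def rsMonoOf (I : Sentence A) (f : Filling) : Mono A :=
  let vs := ((List.range (maxEntry f)).map (· + 1)).filter (fun v => !(rsTypeWord I f v).isEmpty)
  (vs.map (rsTypeWord I f), vs)

/-- The colored row-strict dual immaculate function `ℛ𝔖*_J = Σ_T x_T`, summed over all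
colored row-strict immaculate tableaux `T` of shape `J`. -/
noncomputable def rsDualImm (J : Sentence A) : QSymA A := fun m =>
  (Set.ncard {f : Filling | IsCRSIT J f ∧ rsMonoOf J f = m} : ℚ)

/-- `α ⪰ β` in the reverse lexicographic order on compositions: at the first index where
they differ, `α` has the *smaller* entry (padding with zeros). -/
def RevLexGE (α β : List ℕ) : Prop :=
  α = β ∨ ∃ i, (∀ j < i, α.getD j 0 = β.getD j 0) ∧ α.getD i 0 < β.getD i 0

/-! ### Uncolored (ordinary) versions, for `QSym` -/

namespace Uncolored

/-- A composition: a list of positive integers. -/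
def IsComposition (α : List ℕ) : Prop := ∀ a ∈ α, 1 ≤ a

/-- `β ⪯ α`: the composition `α` is obtained by summing adjacent parts of `β`. -/
def RefinesC (β α : List ℕ) : Prop :=
  ∃ P : List (List ℕ), (∀ p ∈ P, p ≠ []) ∧ P.flatten = β ∧ P.map List.sum = α

/-- A monomial `x_{i_1}^{a_1} ⋯ x_{i_m}^{a_m}` recorded by its exponents and its
strictly increasing positive indices. -/
abbrev MonoU := List ℕ × List ℕ

/-- A quasisymmetric "series", recorded by its coefficient function on monomials.
`QSym` is the span of the monomial functions `MU α` inside this space. -/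
abbrev QSymU := MonoU → ℚ

/-- Validity of a monomial: matching lengths, strictly increasing positive indices,
positive exponents. -/
def ValidMonoU (m : MonoU) : Prop :=
  m.1.length = m.2.length ∧ m.2.Chain' (· < ·) ∧ (∀ j ∈ m.2, 1 ≤ j) ∧ ∀ a ∈ m.1, 1 ≤ a

open Classical in
/-- The monomial quasisymmetric function `M_α`. -/
noncomputable def MU (α : List ℕ) : QSymU := fun m =>
  if m.1 = α ∧ ValidMonoU m then 1 else 0

/-- The fundamental quasisymmetric function `F_α = Σ_{β ⪯ α} M_β`. -/
noncomputable def FU (α : List ℕ) : QSymU :=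
  ∑ᶠ β ∈ {β : List ℕ | RefinesC β α}, MU β

/-- An immaculate tableau of shape `α`: positive integer entries, rows weakly increasing
left to right, first column strictly increasing top to bottom. -/
def IsIT (α : List ℕ) (f : Filling) : Prop :=
  f.map List.length = α ∧
  (∀ row ∈ f, row.Chain' (· ≤ ·)) ∧
  (f.filterMap List.head?).Chain' (· < ·) ∧
  (∀ x ∈ f.flatten, 1 ≤ x)

/-- The number of boxes of `f` with entry `v`. -/
def countOf (f : Filling) (v : ℕ) : ℕ := (f.flatten.filter (fun x => x == v)).length

/-- The monomial `x^T` of an immaculate tableau `T` of type `β`: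
`x_1^{β_1} ⋯ x_h^{β_h}` (zero exponents skipped). -/
def monoOfU (f : Filling) : MonoU :=
  let vs := ((List.range (maxEntry f)).map (· + 1)).filter (fun v => decide (countOf f v ≠ 0))
  (vs.map (countOf f), vs)

/-- The dual immaculate function `𝔖*_α = Σ_T x^T`, summed over all immaculate tableaux
of shape `α`. -/
noncomputable def dualImmU (α : List ℕ) : QSymU := fun m =>
  (Set.ncard {f : Filling | IsIT α f ∧ monoOfU f = m} : ℚ)

/-- The descent composition `co(U)` of a standard immaculate tableau. -/
def descComp (f : Filling) : List ℕ :=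
  if nBoxes f = 0 then [] else compOf (descList f) (nBoxes f)

/-- `L_{α,β}`: the number of standard immaculate tableaux of shape `α` with descent
composition `β`. -/
noncomputable def LU (α β : List ℕ) : ℕ :=
  Set.ncard {f : Filling | IsIT α f ∧ IsStandardF f ∧ descComp f = β}

/-- Edges of the immaculate descent graph `𝔇^n`. -/
def IsEdgeU (α β : List ℕ) : Prop := β ≠ α ∧ LU α β ≠ 0

/-- Directed paths from `α` to `β` in the immaculate descent graph, recorded by their
lists of successive vertices; `[α]` is the empty path at `α`. -/
def PathsU (α β : List ℕ) : Set (List (List ℕ)) :=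
  {p | p.head? = some α ∧ p.getLast? = some β ∧ p.Chain' IsEdgeU}

/-- The signed weight `(-1)^{ℓ(𝒫)} prod(𝒫)` of a path. -/
noncomputable def pathWeightU (p : List (List ℕ)) : ℚ :=
  ((-1 : ℚ)) ^ (p.length - 1) * ((p.zip p.tail).map (fun e => (LU e.1 e.2 : ℚ))).prod

/-- `L⁻¹_{α,β} = Σ_𝒫 (-1)^{ℓ(𝒫)} prod(𝒫)`, over directed paths from `α` to `β` in `𝔇^n`. -/
noncomputable def LinvU (α β : List ℕ) : ℚ :=
  ∑ᶠ p ∈ PathsU α β, pathWeightU p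

end Uncolored

end ColoredImm

/-!
Every Bernstein operator satisfies the right Pieri rule `𝔹_v(f) H_w = ∑_{ab = w} 𝔹_{vb}(f H_a)`.
It is checked on `f = H_K`, where the sum over the sentences `Q` with their coarsenings is an
alternating sum over the refinements of weak sentences. A nonempty last factor of a word can be
cut off as one more word of the refinement or moved next to `v`; the two terms have opposite
signs, and only the right-hand side survives.

Iterated through `𝔖_J = 𝔹_{v_1} ⋯ 𝔹_{v_h}(1)`, the rule expands `𝔖_J H_w` over all ways of adding
to the ends of the rows of `J`, and possibly in one new bottom row, boxes colored from bottom to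
top by the letters of `w`. If the added boxes receive a new largest entry, then a filling of `J`
that is a colored immaculate tableau stays one, and every tableau arises exactly once from the
one obtained by erasing its largest entry. Multiplying out `H_C = H_{w_1} ⋯ H_{w_k}` in this way
therefore lists each tableau of type `C` once, and grouping them by shape gives the coefficients
`K_{J,C}`.
-/

namespace ColoredImm

section Splits

variable {α M : Type*} [AddCommMonoid M]

open scoped Classical in
/-- The finite set of pairs `(a, b)` of words with `a ++ b = w`. -/
noncomputable def splits (w : List α) : Finset (List α × List α) :=
  (Finset.range (w.length + 1)).image fun t => (w.take t, w.drop t)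

@[simp]
lemma mem_splits {w : List α} {p : List α × List α} : p ∈ splits w ↔ p.1 ++ p.2 = w := by
  obtain ⟨a, b⟩ := p
  simp only [splits, Finset.mem_image, Finset.mem_range, Prod.mk.injEq]
  constructor
  · rintro ⟨t, -, rfl, rfl⟩
    exact List.take_append_drop t w
  · rintro rfl
    exact ⟨a.length, by simp, by simp, by simp⟩

lemma sum_splits_eq_sum_range (w : List α) (F : List α × List α → M) :
    ∑ p ∈ splits w, F p = ∑ t ∈ Finset.range (w.length + 1), F (w.take t, w.drop t) := by
  classical
  refine Finset.sum_image fun s hs t ht hst => ?_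
  simp only [Finset.coe_range, Set.mem_Iio] at hs ht
  have hlength := congrArg (List.length ∘ Prod.fst) hst
  simp only [Function.comp_apply, List.length_take] at hlength
  omega

lemma splits_nil : splits ([] : List α) = {([], [])} := by
  ext ⟨a, b⟩
  simp

lemma sum_splits_assoc (w : List α) (F : List α → List α → List α → M) :
    ∑ p ∈ splits w, ∑ q ∈ splits p.1, F q.1 q.2 p.2 =
      ∑ p ∈ splits w, ∑ q ∈ splits p.2, F p.1 q.1 q.2 := by
  rw [Finset.sum_sigma', Finset.sum_sigma']
  refine Finset.sum_bij' (fun x _ => ⟨(x.2.1, x.2.2 ++ x.1.2), (x.2.2, x.1.2)⟩)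
    (fun x _ => ⟨(x.1.1 ++ x.2.1, x.2.2), (x.1.1, x.2.1)⟩) ?_ ?_ ?_ ?_ ?_ <;>
  · rintro ⟨⟨a, b⟩, c, d⟩ hx
    simp only [Finset.mem_sigma, mem_splits] at hx
    obtain ⟨rfl, rfl⟩ := hx
    simp

lemma sum_splits_ite_right_eq_nil (w : List α) (F : List α → M) :
    ∑ p ∈ splits w, (if p.2 = [] then F p.1 else 0) = F w := by
  rw [Finset.sum_eq_single (w, [])]
  · simp
  · rintro ⟨a, b⟩ hab hne
    refine if_neg fun hb : b = [] => hne ?_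
    subst hb
    simpa using hab
  · simp

end Splits

section Product

variable {A : Type*}

lemma mulN_apply (f g : NSymA A) (I : Sentence A) :
    mulN f g I = ∑ p ∈ splits I, f p.1 * g p.2 :=
  (sum_splits_eq_sum_range I fun p => f p.1 * g p.2).symm

lemma mulN_assoc (f g h : NSymA A) : mulN (mulN f g) h = mulN f (mulN g h) := by
  funext I
  simp only [mulN_apply, Finset.sum_mul, Finset.mul_sum, ← mul_assoc]
  exact sum_splits_assoc I fun P Q R => f P * g Q * h R

/-- The concatenation product `mulN` as a bilinear map. -/
def mulNBilin : NSymA A →ₗ[ℚ] NSymA A →ₗ[ℚ] NSymA A :=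
  LinearMap.mk₂ ℚ mulN
    (fun f g h => by funext I; simp [mulN, add_mul, Finset.sum_add_distrib])
    (fun c f g => by funext I; simp [mulN, mul_assoc, Finset.mul_sum])
    (fun f g h => by funext I; simp [mulN, mul_add, Finset.sum_add_distrib])
    (fun c f g => by funext I; simp [mulN, mul_left_comm, Finset.mul_sum])

@[simp]
lemma mulNBilin_apply (f g : NSymA A) : mulNBilin f g = mulN f g := rfl

lemma zero_mulN (g : NSymA A) : mulN 0 g = 0 := mulNBilin.map_zero₂ g

lemma add_mulN (f g h : NSymA A) : mulN (f + g) h = mulN f h + mulN g h :=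
  mulNBilin.map_add₂ f g h

lemma smul_mulN (c : ℚ) (f g : NSymA A) : mulN (c • f) g = c • mulN f g :=
  mulNBilin.map_smul₂ c f g

lemma mulN_Hd_Hd (P Q : Sentence A) : mulN (Hd P) (Hd Q) = Hd (P ++ Q) := by
  classical
  funext I
  rw [mulN_apply]
  trans ∑ p ∈ splits I, if p = (P, Q) then (1 : ℚ) else 0
  · refine Finset.sum_congr rfl fun p _ => ?_
    simp only [Hd, Prod.ext_iff, mul_ite, mul_one, mul_zero, ite_and]
    split_ifs <;> rfl
  · simp [Hd, eq_comm]

lemma mulN_Hd_nil (f : NSymA A) : mulN f (Hd []) = f := by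
  classical
  funext I
  rw [mulN_apply]
  simpa [Hd] using sum_splits_ite_right_eq_nil I f

lemma flattenWS_append (P Q : Sentence A) :
    flattenWS (P ++ Q) = flattenWS P ++ flattenWS Q :=
  List.filter_append ..

lemma isSentence_flattenWS (R : Sentence A) : IsSentence (flattenWS R) := by
  simp [IsSentence, flattenWS]

lemma Hw_eq_Hd_flattenWS (w : List A) : Hw w = Hd (flattenWS [w]) := by
  cases w <;> rfl

end Product

section Refinements

variable {A M : Type*} [AddCommMonoid M]

open scoped Classical in
/-- The finite set of sentences whose concatenation is the word `w`. -/
noncomputable def segmentations (w : List A) : Finset (Sentence A) :=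
  (Finset.univ : Finset (Composition w.length)).image w.splitWrtComposition

@[simp]
lemma mem_segmentations {w : List A} {Q : Sentence A} :
    Q ∈ segmentations w ↔ IsSentence Q ∧ Q.flatten = w := by
  simp only [segmentations, Finset.mem_image, Finset.mem_univ, true_and]
  constructor
  · rintro ⟨c, rfl⟩
    refine ⟨fun q hq => List.ne_nil_of_length_pos ?_, w.flatten_splitWrtComposition c⟩
    exact w.length_pos_of_mem_splitWrtComposition hq
  · rintro ⟨hQ, rfl⟩
    have hpos : ∀ {i}, i ∈ Q.map List.length → 0 < i := by
      simp only [List.mem_map, forall_exists_index, and_imp]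
      rintro _ q hq rfl
      exact List.length_pos_of_ne_nil (hQ q hq)
    exact ⟨⟨Q.map List.length, hpos, by simp [List.length_flatten]⟩,
      Q.splitWrtComposition_flatten _ rfl⟩

lemma isSentence_append {P Q : Sentence A} :
    IsSentence (P ++ Q) ↔ IsSentence P ∧ IsSentence Q :=
  List.forall_mem_append

lemma IsSentence.eq_nil_of_flatten_eq_nil {Q : Sentence A} (hQ : IsSentence Q)
    (h : Q.flatten = []) : Q = [] :=
  List.eq_nil_iff_forall_not_mem.2 fun q hq => hQ q hq (List.flatten_eq_nil_iff.1 h q hq)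

lemma segmentations_nil : segmentations ([] : List A) = {[]} := by
  ext Q
  rw [mem_segmentations, Finset.mem_singleton]
  exact ⟨fun h => h.1.eq_nil_of_flatten_eq_nil h.2, by rintro rfl; simp [IsSentence]⟩

lemma sum_segmentations_eq_sum_splits {w : List A} (hw : w ≠ []) (F : Sentence A → M) :
    ∑ Q ∈ segmentations w, F Q =
      ∑ p ∈ splits w with p.2 ≠ [], ∑ Q ∈ segmentations p.1, F (Q ++ [p.2]) := by
  rw [Finset.sum_sigma']
  symm
  refine Finset.sum_bij' (fun x _ => x.2 ++ [x.1.2])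
    (fun Q _ => ⟨(Q.dropLast.flatten, Q.getLastD []), Q.dropLast⟩) ?_ ?_ ?_ ?_ ?_
  · rintro ⟨⟨a, b⟩, Q⟩ hx
    simp only [Finset.mem_sigma, Finset.mem_filter, mem_splits, mem_segmentations] at hx
    obtain ⟨⟨rfl, hb⟩, hQ, rfl⟩ := hx
    exact mem_segmentations.2 ⟨isSentence_append.2 ⟨hQ, by simpa [IsSentence] using hb⟩, by simp⟩
  · intro Q hQ
    rw [mem_segmentations] at hQ
    obtain ⟨hQ, rfl⟩ := hQ
    obtain rfl | ⟨Q, q, rfl⟩ := Q.eq_nil_or_concat'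
    · exact absurd rfl hw
    · have := isSentence_append.1 hQ
      simp_all [IsSentence]
  · rintro ⟨⟨a, b⟩, Q⟩ hx
    simp only [Finset.mem_sigma, Finset.mem_filter, mem_segmentations] at hx
    simp [hx.2.2]
  · intro Q hQ
    obtain rfl | ⟨Q, q, rfl⟩ := Q.eq_nil_or_concat'
    · simp_all
    · simp
  · simp

/-- The sentences refining the weak sentence `R`, built by cutting up each of its words. -/
noncomputable def refinements (R : Sentence A) : Finset (Sentence A) :=
  open scoped Classical in
  match R with
  | [] => {[]}
  | w :: R => (segmentations w ×ˢ refinements R).image fun p => p.1 ++ p.2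

lemma append_inj_of_flatten_eq {P P' Q Q' : Sentence A} (hP : IsSentence P)
    (hP' : IsSentence P') (hflatten : P.flatten = P'.flatten) (h : P ++ Q = P' ++ Q') :
    P = P' ∧ Q = Q' := by
  obtain ⟨X, rfl, rfl⟩ | ⟨X, rfl, rfl⟩ := List.append_eq_append_iff.1 h
  · obtain rfl := (isSentence_append.1 hP').2.eq_nil_of_flatten_eq_nil (by simpa using hflatten)
    simp
  · obtain rfl := (isSentence_append.1 hP).2.eq_nil_of_flatten_eq_nil (by simpa using hflatten)
    simp

lemma sum_refinements_cons (w : List A) (R : Sentence A) (F : Sentence A → M) :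
    ∑ Q ∈ refinements (w :: R), F Q =
      ∑ P ∈ segmentations w, ∑ Q ∈ refinements R, F (P ++ Q) := by
  classical
  rw [refinements, Finset.sum_image, Finset.sum_product]
  rintro ⟨P, Q⟩ hPQ ⟨P', Q'⟩ hPQ' h
  simp only [Finset.coe_product, Set.mem_prod, Finset.mem_coe, mem_segmentations] at hPQ hPQ'
  exact Prod.ext_iff.2
    (append_inj_of_flatten_eq hPQ.1.1 hPQ'.1.1 (hPQ.1.2.trans hPQ'.1.2.symm) h)

lemma sum_refinements_append (R S : Sentence A) (F : Sentence A → M) :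
    ∑ Q ∈ refinements (R ++ S), F Q =
      ∑ P ∈ refinements R, ∑ Q ∈ refinements S, F (P ++ Q) := by
  induction R generalizing F with
  | nil => simp [refinements]
  | cons w R ih => simp [sum_refinements_cons, ih]

lemma sum_refinements_singleton (w : List A) (F : Sentence A → M) :
    ∑ Q ∈ refinements [w], F Q = ∑ Q ∈ segmentations w, F Q := by
  rw [sum_refinements_cons]
  simp [refinements]

lemma refines_cons_iff {Q : Sentence A} {w : List A} {R : Sentence A} :
    Refines Q (w :: R) ↔ ∃ P Q', P ≠ [] ∧ P.flatten = w ∧ Refines Q' R ∧ P ++ Q' = Q := by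
  constructor
  · rintro ⟨_ | ⟨P, Ps⟩, hP, rfl, hR⟩
    · simp at hR
    · simp only [List.map_cons, List.cons.injEq] at hR
      simp only [List.forall_mem_cons] at hP
      exact ⟨P, Ps.flatten, hP.1, hR.1, ⟨Ps, hP.2, rfl, hR.2⟩, rfl⟩
  · rintro ⟨P, _, hP, rfl, ⟨Ps, hPs, rfl, rfl⟩, rfl⟩
    exact ⟨P :: Ps, List.forall_mem_cons.2 ⟨hP, hPs⟩, rfl, rfl⟩

lemma refines_nil_iff {Q : Sentence A} : Refines Q [] ↔ Q = [] := by
  simp [Refines]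

lemma mem_refinements {Q R : Sentence A} :
    Q ∈ refinements R ↔ IsSentence Q ∧ Refines Q (flattenWS R) := by
  induction R generalizing Q with
  | nil =>
    rw [refinements, Finset.mem_singleton, flattenWS, List.filter_nil, refines_nil_iff]
    exact ⟨by rintro rfl; simp [IsSentence], And.right⟩
  | cons w R ih =>
    simp only [refinements, Finset.mem_image, Finset.mem_product, ih]
    obtain rfl | hw := eq_or_ne w []
    · have hR : flattenWS ([] :: R) = flattenWS R := flattenWS_append [[]] R
      simp [hR, segmentations_nil]
    · have hR : flattenWS (w :: R) = w :: flattenWS R := by simp [flattenWS, hw]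
      simp only [hR, refines_cons_iff, mem_segmentations]
      constructor
      · rintro ⟨⟨P, Q⟩, ⟨⟨hP, rfl⟩, hQ, hQR⟩, rfl⟩
        exact ⟨isSentence_append.2 ⟨hP, hQ⟩, P, Q, by rintro rfl; exact hw rfl, rfl, hQR, rfl⟩
      · rintro ⟨hQ, P, Q', -, rfl, hQR, rfl⟩
        rw [isSentence_append] at hQ
        exact ⟨(P, Q'), ⟨⟨hQ.1, rfl⟩, hQ.2, hQR⟩, rfl⟩

end Refinements

section SignedTranslate

variable {A M : Type*} [AddCommGroup M] [Module ℚ M]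

/-- The operator on functions of a word attached to the weak sentence `R`:
the alternating sum over the refinements `Q` of `R` of right translation by the
concatenation of the reversal of `Q`. -/
noncomputable def signedTranslate (R : Sentence A) (Φ : List A → M) (v : List A) : M :=
  ∑ Q ∈ refinements R, (-1 : ℚ) ^ Q.length • Φ (v ++ Q.reverse.flatten)

lemma signedTranslate_nil (Φ : List A → M) (v : List A) : signedTranslate [] Φ v = Φ v := by
  simp [signedTranslate, refinements]

lemma signedTranslate_append (R S : Sentence A) (Φ : List A → M) (v : List A) :
    signedTranslate (R ++ S) Φ v = signedTranslate S (signedTranslate R Φ) v := by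
  simp only [signedTranslate, sum_refinements_append, Finset.smul_sum, smul_smul]
  rw [Finset.sum_comm]
  simp [← pow_add, add_comm]

lemma sum_splits_signedTranslate (w v : List A) (Φ : List A → M) :
    ∑ p ∈ splits w, signedTranslate [p.1] Φ (v ++ p.2) = if w = [] then Φ v else 0 := by
  split_ifs with hw
  · subst hw
    simp [splits_nil, signedTranslate, sum_refinements_singleton, segmentations_nil]
  · rw [← Finset.sum_filter_add_sum_filter_not _ fun p => p.2 = []]
    have hnil : ∑ p ∈ splits w with p.2 = [], signedTranslate [p.1] Φ (v ++ p.2) =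
        signedTranslate [w] Φ v := by
      rw [Finset.sum_filter, ← sum_splits_ite_right_eq_nil w fun a => signedTranslate [a] Φ v]
      exact Finset.sum_congr rfl fun p _ => by split_ifs with hp <;> simp [hp]
    rw [hnil, signedTranslate, sum_refinements_singleton, sum_segmentations_eq_sum_splits hw,
      ← Finset.sum_add_distrib]
    refine Finset.sum_eq_zero fun p _ => ?_
    simp [signedTranslate, sum_refinements_singleton, pow_succ]

end SignedTranslate

lemma finsum_mem_comp_eq_finsum_mem_ncard_nsmul {ι κ M : Type*} [AddCommMonoid M] {s : Set ι}
    (hs : s.Finite) {t : Set κ} {g : ι → κ} (hg : Set.MapsTo g s t) (f : κ → M) :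
    ∑ᶠ i ∈ s, f (g i) = ∑ᶠ k ∈ t, {i ∈ s | g i = k}.ncard • f k := by
  classical
  lift s to Finset ι using hs
  have hncard : ∀ k, {i ∈ (s : Set ι) | g i = k}.ncard = (s.filter (g · = k)).card := fun k => by
    rw [← Set.ncard_coe_finset, Finset.coe_filter]
    rfl
  simp only [hncard]
  rw [finsum_mem_coe_finset, Finset.sum_comp]
  refine (finsum_mem_eq_sum_of_inter_support_eq _ (Set.ext fun k => ?_)).symm
  refine and_congr_left fun hk => ?_
  obtain ⟨i, hi⟩ := Finset.card_ne_zero.1 (left_ne_zero_of_smul hk)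
  obtain ⟨his, rfl⟩ := Finset.mem_filter.1 hi
  exact iff_of_true (hg his) (Finset.mem_coe.2 (Finset.mem_image_of_mem g his))

section FinsumIte

variable {ι κ M : Type*} [AddCommMonoid M]

variable [DecidableEq ι] (t : Set ι) [DecidablePred (· ∈ t)] (s : Finset κ)

lemma finsum_mem_sum_ite_mem (r : κ → Finset ι) (φ : ι → κ → M) :
    ∑ᶠ i ∈ t, ∑ k ∈ s, (if i ∈ r k then φ i k else 0) =
      ∑ k ∈ s, ∑ i ∈ r k with i ∈ t, φ i k := by
  have hsupport : ∀ k ∈ s, Function.support (fun i => if i ∈ t ∧ i ∈ r k then φ i k else 0) ⊆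
      ((r k).filter (· ∈ t) : Finset ι) := fun k _ i hi => by
    rw [Finset.coe_filter]
    exact (ite_ne_right_iff.1 hi).1.symm
  trans ∑ᶠ i, ∑ k ∈ s, if i ∈ t ∧ i ∈ r k then φ i k else 0
  · refine finsum_congr fun i => ?_
    rw [finsum_eq_if]
    split_ifs with hi <;> simp [hi]
  · rw [finsum_sum_comm _ _ fun k hk => (Finset.finite_toSet _).subset (hsupport k hk)]
    refine Finset.sum_congr rfl fun k hk => ?_
    rw [finsum_eq_sum_of_support_subset _ (hsupport k hk)]
    refine Finset.sum_congr rfl fun i hi => if_pos ?_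
    simpa [and_comm] using hi

lemma finsum_mem_sum_ite_eq (r : κ → ι) (φ : κ → M) :
    ∑ᶠ i ∈ t, ∑ k ∈ s, (if r k = i then φ k else 0) = ∑ k ∈ s, if r k ∈ t then φ k else 0 := by
  have h := finsum_mem_sum_ite_mem t s (fun k => {r k}) fun _ k => φ k
  simpa only [Finset.mem_singleton, eq_comm, Finset.sum_filter, Finset.sum_singleton] using h

end FinsumIte

section WeakSplits

variable {A M : Type*} [AddCommMonoid M]

open scoped Classical in
/-- The finite set of pairs of weak sentences whose wordwise concatenation is `K`. -/
noncomputable def weakSplits (K : Sentence A) : Finset (Sentence A × Sentence A) :=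
  match K with
  | [] => {([], [])}
  | w :: K => (splits w ×ˢ weakSplits K).image fun x => (x.1.1 :: x.2.1, x.1.2 :: x.2.2)

lemma sum_weakSplits_cons (w : List A) (K : Sentence A) (F : Sentence A × Sentence A → M) :
    ∑ p ∈ weakSplits (w :: K), F p =
      ∑ q ∈ splits w, ∑ p ∈ weakSplits K, F (q.1 :: p.1, q.2 :: p.2) := by
  classical
  rw [weakSplits, Finset.sum_image, Finset.sum_product]
  rintro ⟨⟨a, b⟩, P, Q⟩ - ⟨⟨a', b'⟩, P', Q'⟩ - h
  simp_all

lemma sum_weakSplits_concat (K : Sentence A) (w : List A) (F : Sentence A × Sentence A → M) :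
    ∑ p ∈ weakSplits (K ++ [w]), F p =
      ∑ p ∈ weakSplits K, ∑ q ∈ splits w, F (p.1 ++ [q.1], p.2 ++ [q.2]) := by
  induction K generalizing F with
  | nil =>
    rw [List.nil_append, sum_weakSplits_cons]
    simp [weakSplits]
  | cons u K ih => simp [sum_weakSplits_cons, ih]

lemma sum_map_splitsOf (K : Sentence A) (F : Sentence A × Sentence A → M) :
    ((splitsOf K).map F).sum = ∑ p ∈ weakSplits K, F p := by
  induction K generalizing F with
  | nil => simp [splitsOf, weakSplits]
  | cons w K ih =>
    rw [sum_weakSplits_cons, Finset.sum_comm, ← ih]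
    simp only [splitsOf, List.map_flatten, List.map_map, List.sum_flatten,
      sum_splits_eq_sum_range, Function.comp_def]
    rfl

lemma length_of_mem_weakSplits {K : Sentence A} {p : Sentence A × Sentence A}
    (hp : p ∈ weakSplits K) : p.1.length = K.length ∧ p.2.length = K.length := by
  induction K generalizing p with
  | nil => simp_all [weakSplits]
  | cons w K ih =>
    simp only [weakSplits, Finset.mem_image, Finset.mem_product] at hp
    obtain ⟨x, ⟨-, hx⟩, rfl⟩ := hp
    simpa using ih hx

end WeakSplits

section Bernstein

variable {A : Type*}

open scoped Classical in
lemma MQ_restrictMono (I P : Sentence A) {js : List ℕ} (hlength : P.length = js.length)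
    (hchain : js.IsChain (· < ·)) (hpos : ∀ j ∈ js, 1 ≤ j) :
    MQ I (restrictMono P js) = if flattenWS P = I then 1 else 0 := by
  have hwords : (restrictMono P js).1 = flattenWS P := by
    conv_rhs => rw [← List.map_fst_zip hlength.le, flattenWS, List.filter_map]
    rfl
  have hindices : (restrictMono P js).2.Sublist js := by
    conv_rhs => rw [← List.map_snd_zip hlength.ge]
    exact List.filter_sublist.map _
  have hvalid : ValidMono (restrictMono P js) :=
    ⟨by simp [restrictMono], hchain.sublist hindices, fun j hj => hpos j (hindices.subset hj),
      hwords ▸ isSentence_flattenWS P⟩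
  simp [MQ, hwords, hvalid]

open scoped Classical in
lemma mulQ_MQ_MQ (I S K : Sentence A) :
    mulQ (MQ I) (MQ S) (K, List.range' 1 K.length) =
      ∑ p ∈ weakSplits K, if flattenWS p.1 = I ∧ flattenWS p.2 = S then 1 else 0 := by
  rw [mulQ, sum_map_splitsOf]
  refine Finset.sum_congr rfl fun p hp => ?_
  have hlength := length_of_mem_weakSplits hp
  have hchain : (List.range' 1 K.length).IsChain (· < ·) :=
    (List.isChain_range' _ _ _).imp fun _ _ h => Nat.lt_of_lt_of_eq (Nat.lt_succ_self _) h.symm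
  have hpos : ∀ j ∈ List.range' 1 K.length, 1 ≤ j := fun j hj => (List.mem_range'_1.1 hj).1
  rw [MQ_restrictMono I p.1 (by simpa using hlength.1) hchain hpos,
    MQ_restrictMono S p.2 (by simpa using hlength.2) hchain hpos]
  simp only [mul_ite, mul_one, mul_zero, ite_and]
  split_ifs <;> rfl

lemma linearCombination_Hd_apply (l : Sentence A →₀ ℚ) (I : Sentence A) :
    Finsupp.linearCombination ℚ Hd l I = l I := by
  classical
  simp +contextual [Finsupp.linearCombination_apply, Finsupp.sum, Hd, eq_comm]

variable {l : Sentence A →₀ ℚ}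

lemma pairNQ_linearCombination
    (hl : l ∈ Finsupp.supported ℚ ℚ {K : Sentence A | IsSentence K}) (F : QSymA A) :
    pairNQ (Finsupp.linearCombination ℚ Hd l) F =
      ∑ K ∈ l.support, l K * F (K, List.range' 1 K.length) := by
  simp only [pairNQ, linearCombination_Hd_apply]
  refine finsum_mem_eq_sum_of_inter_support_eq _ (Set.ext fun K => and_congr_left fun hK => ?_)
  have hKl : K ∈ l.support := Finsupp.mem_support_iff.2 (left_ne_zero_of_mul hK)
  exact iff_of_true (hl hKl) hKl

open scoped Classical in
lemma rperp_MQ_linearCombination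
    (hl : l ∈ Finsupp.supported ℚ ℚ {K : Sentence A | IsSentence K}) (S : Sentence A) :
    rperp (MQ S) (Finsupp.linearCombination ℚ Hd l) =
      ∑ k ∈ l.support.sigma weakSplits,
        if flattenWS k.2.2 = S then l k.1 • Hd (flattenWS k.2.1) else 0 := by
  have hterm (I : Sentence A) :
      pairNQ (Finsupp.linearCombination ℚ Hd l) (mulQ (MQ I) (MQ S)) • Hd I =
        ∑ k ∈ l.support.sigma weakSplits, if flattenWS k.2.1 = I then
          if flattenWS k.2.2 = S then l k.1 • Hd (flattenWS k.2.1) else 0 else 0 := by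
    rw [pairNQ_linearCombination hl, Finset.sum_sigma, Finset.sum_smul]
    refine Finset.sum_congr rfl fun K _ => ?_
    rw [mulQ_MQ_MQ, Finset.mul_sum, Finset.sum_smul]
    refine Finset.sum_congr rfl fun p _ => ?_
    simp only [ite_and]
    split_ifs with hI <;> simp [hI]
  simp only [rperp, hterm]
  rw [finsum_mem_sum_ite_eq]
  exact Finset.sum_congr rfl fun k _ => if_pos (isSentence_flattenWS _)

open scoped Classical in
lemma finsum_mem_rperp_MQ_linearCombination
    (hl : l ∈ Finsupp.supported ℚ ℚ {K : Sentence A | IsSentence K}) (Q : Sentence A) :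
    ∑ᶠ S ∈ {S : Sentence A | Refines Q S}, rperp (MQ S) (Finsupp.linearCombination ℚ Hd l) =
      ∑ k ∈ l.support.sigma weakSplits,
        if Refines Q (flattenWS k.2.2) then l k.1 • Hd (flattenWS k.2.1) else 0 := by
  rw [finsum_mem_congr rfl fun S _ => rperp_MQ_linearCombination hl S, finsum_mem_sum_ite_eq]
  rfl

/-- The value of the Bernstein operator `𝔹_v` on `H_K`, where `K` may be a weak sentence. -/
noncomputable def bernsteinHd (v : List A) (K : Sentence A) : NSymA A :=
  ∑ p ∈ weakSplits K, mulN (signedTranslate p.2 Hw v) (Hd (flattenWS p.1))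

lemma Bern_linearCombination (v : List A)
    (hl : l ∈ Finsupp.supported ℚ ℚ {K : Sentence A | IsSentence K}) :
    Bern v (Finsupp.linearCombination ℚ Hd l) =
      Finsupp.linearCombination ℚ (bernsteinHd v) l := by
  classical
  have hterm : ∀ Q ∈ {Q : Sentence A | IsSentence Q},
      (-1 : ℚ) ^ Q.length • mulN (Hw (v ++ Q.reverse.flatten))
        (∑ᶠ S ∈ {S | Refines Q S}, rperp (MQ S) (Finsupp.linearCombination ℚ Hd l)) =
      ∑ k ∈ l.support.sigma weakSplits, if Q ∈ refinements k.2.2 then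
        l k.1 • (-1 : ℚ) ^ Q.length •
          mulN (Hw (v ++ Q.reverse.flatten)) (Hd (flattenWS k.2.1)) else 0 := by
    intro Q (hQ : IsSentence Q)
    rw [finsum_mem_rperp_MQ_linearCombination hl, ← mulNBilin_apply, map_sum, Finset.smul_sum]
    refine Finset.sum_congr rfl fun k _ => ?_
    simp only [mem_refinements, hQ, true_and]
    split_ifs
    · rw [map_smul, smul_comm, mulNBilin_apply]
    · rw [map_zero, smul_zero]
  have hfilter (R : Sentence A) :
      {Q ∈ refinements R | Q ∈ {Q : Sentence A | IsSentence Q}} = refinements R :=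
    Finset.filter_true_of_mem fun Q hQ => (mem_refinements.1 hQ).1
  rw [Bern, finsum_mem_congr rfl hterm, finsum_mem_sum_ite_mem, Finset.sum_sigma,
    Finsupp.linearCombination_apply, Finsupp.sum]
  refine Finset.sum_congr rfl fun K _ => ?_
  simp only [hfilter, bernsteinHd, Finset.smul_sum, signedTranslate, ← mulNBilin_apply, map_sum,
    map_smul, LinearMap.sum_apply, LinearMap.smul_apply]

end Bernstein

section Pieri

variable {A : Type*}

/-- The algebra `NSym_A` as a subspace of the formal series `NSymA A`: the span of the `H_K`
for sentences `K`. -/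
def nsym (A : Type*) : Submodule ℚ (NSymA A) :=
  Submodule.span ℚ (Hd '' {K : Sentence A | IsSentence K})

variable {v w : List A} {f g : NSymA A}

lemma Hd_mem_nsym {K : Sentence A} (hK : IsSentence K) : Hd K ∈ nsym A :=
  Submodule.subset_span ⟨K, hK, rfl⟩

lemma Hw_mem_nsym (w : List A) : Hw w ∈ nsym A := by
  rw [Hw_eq_Hd_flattenWS]
  exact Hd_mem_nsym (isSentence_flattenWS _)

lemma mulN_mem_nsym (hf : f ∈ nsym A) (hg : g ∈ nsym A) : mulN f g ∈ nsym A := by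
  have hmap : Submodule.map₂ mulNBilin (nsym A) (nsym A) ≤ nsym A := by
    rw [nsym, Submodule.map₂_span_span]
    refine Submodule.span_mono ?_
    rintro _ ⟨_, ⟨P, hP, rfl⟩, _, ⟨Q, hQ, rfl⟩, rfl⟩
    exact ⟨P ++ Q, isSentence_append.2 ⟨hP, hQ⟩, (mulN_Hd_Hd P Q).symm⟩
  exact hmap (Submodule.apply_mem_map₂ _ hf hg)

lemma Bern_add (v : List A) (hf : f ∈ nsym A) (hg : g ∈ nsym A) :
    Bern v (f + g) = Bern v f + Bern v g := by
  obtain ⟨l, hl, rfl⟩ := (Finsupp.mem_span_image_iff_linearCombination ℚ).1 hf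
  obtain ⟨l', hl', rfl⟩ := (Finsupp.mem_span_image_iff_linearCombination ℚ).1 hg
  rw [← map_add, Bern_linearCombination v hl, Bern_linearCombination v hl',
    Bern_linearCombination v (add_mem hl hl'), map_add]

lemma Bern_smul (v : List A) (c : ℚ) (hf : f ∈ nsym A) : Bern v (c • f) = c • Bern v f := by
  obtain ⟨l, hl, rfl⟩ := (Finsupp.mem_span_image_iff_linearCombination ℚ).1 hf
  rw [← map_smul, Bern_linearCombination v hl,
    Bern_linearCombination v (Submodule.smul_mem _ c hl), map_smul]

lemma Bern_zero (v : List A) : Bern v (0 : NSymA A) = 0 := by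
  simpa using Bern_smul v 0 (zero_mem (nsym A))

lemma Bern_sum {ι : Type*} (v : List A) (s : Finset ι) {f : ι → NSymA A}
    (hf : ∀ i, f i ∈ nsym A) : Bern v (∑ i ∈ s, f i) = ∑ i ∈ s, Bern v (f i) := by
  classical
  induction s using Finset.induction_on with
  | empty => simp [Bern_zero]
  | insert i s hi ih =>
    rw [Finset.sum_insert hi, Finset.sum_insert hi, Bern_add v (hf i) (sum_mem fun j _ => hf j), ih]

lemma Bern_finsum_mem {ι : Type*} (v : List A) {s : Set ι} (hs : s.Finite) {f : ι → NSymA A}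
    (hf : ∀ i, f i ∈ nsym A) : Bern v (∑ᶠ i ∈ s, f i) = ∑ᶠ i ∈ s, Bern v (f i) := by
  rw [finsum_mem_eq_finite_toFinset_sum _ hs, finsum_mem_eq_finite_toFinset_sum _ hs,
    Bern_sum v _ hf]

lemma Bern_Hd (v : List A) {K : Sentence A} (hK : IsSentence K) :
    Bern v (Hd K) = bernsteinHd v K := by
  have hl : Finsupp.single K (1 : ℚ) ∈ Finsupp.supported ℚ ℚ {K : Sentence A | IsSentence K} :=
    Finsupp.single_mem_supported ℚ 1 hK
  simpa using Bern_linearCombination v hl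

lemma bernsteinHd_mem_nsym (v : List A) (K : Sentence A) : bernsteinHd v K ∈ nsym A :=
  sum_mem fun _ _ => mulN_mem_nsym (sum_mem fun _ _ => Submodule.smul_mem _ _ (Hw_mem_nsym _))
    (Hd_mem_nsym (isSentence_flattenWS _))

lemma Bern_mem_nsym (v : List A) (hf : f ∈ nsym A) : Bern v f ∈ nsym A := by
  obtain ⟨l, hl, rfl⟩ := (Finsupp.mem_span_image_iff_linearCombination ℚ).1 hf
  rw [Bern_linearCombination v hl]
  exact sum_mem fun K _ => Submodule.smul_mem _ _ (bernsteinHd_mem_nsym v K)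

lemma Bern_Hd_nil (v : List A) : Bern v (Hd []) = Hw v := by
  rw [Bern_Hd v (by simp [IsSentence])]
  simp [bernsteinHd, weakSplits, signedTranslate_nil, flattenWS, mulN_Hd_nil]

lemma bernsteinHd_append_flattenWS (v : List A) (K : Sentence A) (w : List A) :
    bernsteinHd v (K ++ flattenWS [w]) = bernsteinHd v (K ++ [w]) := by
  cases w with
  | nil =>
    have hnil (R : Sentence A) : signedTranslate (R ++ [[]]) Hw v = signedTranslate R Hw v := by
      rw [signedTranslate_append, signedTranslate, sum_refinements_singleton, segmentations_nil]
      simp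
    simp [bernsteinHd, sum_weakSplits_concat, splits_nil, hnil, flattenWS]
  | cons x w => rfl

lemma sum_splits_mulN_signedTranslate (v w : List A) (R : Sentence A) (Φ g : List A → NSymA A) :
    ∑ p ∈ splits w, ∑ q ∈ splits p.1,
      mulN (signedTranslate (R ++ [q.2]) Φ (v ++ p.2)) (g q.1) =
        mulN (signedTranslate R Φ v) (g w) := by
  simp only [signedTranslate_append]
  rw [sum_splits_assoc w fun a b c =>
    mulN (signedTranslate [b] (signedTranslate R Φ) (v ++ c)) (g a)]
  have hcancel (p : List A × List A) :
      ∑ q ∈ splits p.2, mulN (signedTranslate [q.1] (signedTranslate R Φ) (v ++ q.2)) (g p.1) =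
        if p.2 = [] then mulN (signedTranslate R Φ v) (g p.1) else 0 := by
    simp only [← mulNBilin_apply, ← LinearMap.sum_apply, ← map_sum, sum_splits_signedTranslate]
    split_ifs <;> simp
  simp only [hcancel]
  exact sum_splits_ite_right_eq_nil w fun a => mulN (signedTranslate R Φ v) (g a)

lemma mulN_bernsteinHd_Hw (v : List A) (K : Sentence A) (w : List A) :
    mulN (bernsteinHd v K) (Hw w) =
      ∑ p ∈ splits w, bernsteinHd (v ++ p.2) (K ++ [p.1]) := by
  have hfactor (P : Sentence A) (a : List A) :
      Hd (flattenWS (P ++ [a])) = mulN (Hd (flattenWS P)) (Hw a) := by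
    rw [flattenWS_append, Hw_eq_Hd_flattenWS, mulN_Hd_Hd]
  simp only [bernsteinHd, sum_weakSplits_concat, hfactor]
  rw [Finset.sum_comm, ← mulNBilin_apply, map_sum, LinearMap.sum_apply]
  refine Finset.sum_congr rfl fun p _ => ?_
  rw [sum_splits_mulN_signedTranslate v w p.2 Hw fun a => mulN (Hd (flattenWS p.1)) (Hw a),
    mulNBilin_apply, mulN_assoc]

theorem mulN_Bern_Hw (v : List A) (hf : f ∈ nsym A) (w : List A) :
    mulN (Bern v f) (Hw w) = ∑ p ∈ splits w, Bern (v ++ p.2) (mulN f (Hw p.1)) := by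
  induction hf using Submodule.span_induction with
  | zero => simp [zero_mulN, Bern_zero]
  | add f g hf hg ihf ihg =>
    simp only [Bern_add _ hf hg, add_mulN, ihf, ihg, Finset.sum_add_distrib,
      Bern_add _ (mulN_mem_nsym hf (Hw_mem_nsym _)) (mulN_mem_nsym hg (Hw_mem_nsym _))]
  | smul c f hf ih =>
    simp only [Bern_smul _ c hf, smul_mulN, ih, Finset.smul_sum,
      Bern_smul _ c (mulN_mem_nsym hf (Hw_mem_nsym _))]
  | mem f hf =>
    obtain ⟨K, hK, rfl⟩ := hf
    have hKw (u : List A) : IsSentence (K ++ flattenWS [u]) :=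
      isSentence_append.2 ⟨hK, isSentence_flattenWS _⟩
    rw [Bern_Hd v hK, mulN_bernsteinHd_Hw]
    simp only [Hw_eq_Hd_flattenWS, mulN_Hd_Hd, Bern_Hd _ (hKw _), bernsteinHd_append_flattenWS]

end Pieri

section Tableaux

variable {A : Type*}

/-- A row of a colored tableau: the boxes from left to right, each recorded by its color and
its entry. -/
abbrev Row (A : Type*) := List (A × ℕ)

/-- A colored diagram together with a filling, recorded by its rows from top to bottom. -/
abbrev Tableau (A : Type*) := List (Row A)

/-- The sentence formed by the colors of the rows of a tableau. -/
def shape (T : Tableau A) : Sentence A := T.map (List.map Prod.fst)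

/-- The filling underlying a tableau. -/
def entries (T : Tableau A) : Filling := T.map (List.map Prod.snd)

/-- The word of the colors of the boxes of a row with entry `n`. -/
def rowWord (n : ℕ) (r : Row A) : List A := (r.filter (·.2 = n)).map Prod.fst

/-- The `n`-th word of the type of a tableau: the colors of the boxes with entry `n`, read
left to right and bottom to top. -/
def typeWordAt (n : ℕ) (T : Tableau A) : List A := (T.reverse.map (rowWord n)).flatten

/-- The row of boxes with entry `n` colored by the letters of `w`. -/
def constRow (n : ℕ) (w : List A) : Row A := w.map (·, n)

/-- The boxes of a row with entry at most `n`. -/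
def cut (n : ℕ) (r : Row A) : Row A := r.filter (·.2 ≤ n)

/-- The tableau of the boxes with entry at most `n`, rows left empty being removed. -/
def strip (n : ℕ) (T : Tableau A) : Tableau A := (T.map (cut n)).filter (· ≠ [])

/-- A nonempty weakly increasing row with entries in `{1, …, n}`. -/
structure IsRow (n : ℕ) (r : Row A) : Prop where
  ne_nil : r ≠ []
  pairwise : r.Pairwise (·.2 ≤ ·.2)
  mem_Icc : ∀ x ∈ r, x.2 ∈ Finset.Icc 1 n

/-- The first entry of `r` is smaller than the first entry of `s`. -/
def HeadLT (r s : Row A) : Prop := ∀ x ∈ r.head?, ∀ y ∈ s.head?, x.2 < y.2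

/-- A colored immaculate tableau with entries in `{1, …, n}`. -/
structure IsTableau (n : ℕ) (T : Tableau A) : Prop where
  isRow : ∀ r ∈ T, IsRow n r
  pairwise : T.Pairwise HeadLT

lemma isTableau_cons {n : ℕ} {r : Row A} {T : Tableau A} :
    IsTableau n (r :: T) ↔ IsRow n r ∧ (∀ s ∈ T, HeadLT r s) ∧ IsTableau n T := by
  constructor
  · rintro ⟨hrow, hlt⟩
    rw [List.forall_mem_cons] at hrow
    rw [List.pairwise_cons] at hlt
    exact ⟨hrow.1, hlt.1, hrow.2, hlt.2⟩
  · rintro ⟨hr, hlt, hT⟩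
    exact ⟨List.forall_mem_cons.2 ⟨hr, hT.isRow⟩, List.pairwise_cons.2 ⟨hlt, hT.pairwise⟩⟩

lemma isTableau_nil (n : ℕ) : IsTableau n ([] : Tableau A) :=
  ⟨List.forall_mem_nil _, List.Pairwise.nil⟩

lemma typeWordAt_cons (n : ℕ) (r : Row A) (T : Tableau A) :
    typeWordAt n (r :: T) = typeWordAt n T ++ rowWord n r := by
  simp [typeWordAt]

lemma mem_typeWordAt {n : ℕ} {T : Tableau A} {a : A} :
    a ∈ typeWordAt n T ↔ ∃ r ∈ T, (a, n) ∈ r := by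
  simp [typeWordAt, rowWord]

lemma mem_strip {n : ℕ} {T : Tableau A} {s : Row A} :
    s ∈ strip n T ↔ (∃ r ∈ T, cut n r = s) ∧ s ≠ [] := by
  simp [strip]

section Rows

variable {n : ℕ} {r s : Row A}

lemma headLT_nil_right (r : Row A) : HeadLT r [] := by
  simp [HeadLT]

lemma headLT_append_left_iff (hr : r ≠ []) (t : Row A) : HeadLT (r ++ t) s ↔ HeadLT r s := by
  rw [HeadLT, HeadLT, List.head?_append_of_ne_nil _ hr]

lemma cut_append_constRow (hr : ∀ x ∈ r, x.2 ≤ n) (w : List A) :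
    cut n (r ++ constRow (n + 1) w) = r := by
  have hnil : (constRow (n + 1) w).filter (·.2 ≤ n) = [] := by
    simp [constRow]
  rw [cut, List.filter_append, hnil, List.append_nil, List.filter_eq_self]
  simpa only [decide_eq_true_eq] using hr

lemma lt_of_cut_eq_nil (hnil : cut n r = []) {x : A × ℕ} (hx : x ∈ r) : n < x.2 := by
  simp only [cut, List.filter_eq_nil_iff, decide_eq_true_eq, not_le] at hnil
  exact hnil x hx

lemma rowWord_append_constRow (hr : ∀ x ∈ r, x.2 ≤ n) (w : List A) :
    rowWord (n + 1) (r ++ constRow (n + 1) w) = w := by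
  have hnil : r.filter (·.2 = n + 1) = [] := by
    simp only [List.filter_eq_nil_iff, decide_eq_true_eq]
    exact fun x hx => (Nat.lt_succ_of_le (hr x hx)).ne
  simp [rowWord, constRow, List.filter_append, hnil, List.filter_map, Function.comp_def]

lemma cut_append_constRow_rowWord (hsorted : r.Pairwise (·.2 ≤ ·.2))
    (hle : ∀ x ∈ r, x.2 ≤ n + 1) : cut n r ++ constRow (n + 1) (rowWord (n + 1) r) = r := by
  induction r with
  | nil => rfl
  | cons x r ih =>
    rw [List.pairwise_cons] at hsorted
    rw [List.forall_mem_cons] at hle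
    specialize ih hsorted.2 hle.2
    by_cases hx : x.2 ≤ n
    · have hcut : cut n (x :: r) = x :: cut n r := List.filter_cons_of_pos (by simpa using hx)
      have hword : rowWord (n + 1) (x :: r) = rowWord (n + 1) r := by
        rw [rowWord, rowWord, List.filter_cons_of_neg (by simp only [decide_eq_true_eq]; omega)]
      rw [hcut, hword, List.cons_append, ih]
    · have hcut : ∀ s : Row A, (∀ y ∈ s, x.2 ≤ y.2) → cut n s = [] := fun s hs => by
        simp only [cut, List.filter_eq_nil_iff, decide_eq_true_eq]
        exact fun y hy hyn => hx ((hs y hy).trans hyn)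
      have hxn : x.2 = n + 1 := by omega
      have hword : constRow (n + 1) (rowWord (n + 1) (x :: r)) =
          x :: constRow (n + 1) (rowWord (n + 1) r) := by
        rw [rowWord, List.filter_cons_of_pos (by simpa using hxn)]
        simp only [constRow, rowWord, List.map_cons, ← hxn]
      rw [hcut r hsorted.1, List.nil_append] at ih
      rw [hcut _ (List.forall_mem_cons.2 ⟨le_rfl, hsorted.1⟩), List.nil_append, hword, ih]

namespace IsRow

lemma le (hr : IsRow n r) {x : A × ℕ} (hx : x ∈ r) : x.2 ≤ n :=
  (Finset.mem_Icc.1 (hr.mem_Icc x hx)).2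

lemma cut_append (hr : IsRow (n + 1) r) :
    cut n r ++ constRow (n + 1) (rowWord (n + 1) r) = r :=
  cut_append_constRow_rowWord hr.pairwise fun _ => hr.le

lemma append_constRow (hr : IsRow n r) (w : List A) :
    IsRow (n + 1) (r ++ constRow (n + 1) w) := by
  refine ⟨by simp [hr.ne_nil], ?_, ?_⟩
  · refine List.pairwise_append.2 ⟨hr.pairwise, ?_, fun x hx y hy => ?_⟩
    · simp [constRow, List.pairwise_map, List.pairwise_of_forall]
    · obtain ⟨a, -, rfl⟩ := List.mem_map.1 hy
      exact (hr.le hx).trans n.le_succ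
  · simp only [List.mem_append]
    rintro x (hx | hx)
    · exact Finset.Icc_subset_Icc_right n.le_succ (hr.mem_Icc x hx)
    · obtain ⟨a, -, rfl⟩ := List.mem_map.1 hx
      simp

lemma cut (hr : IsRow (n + 1) r) (hne : cut n r ≠ []) : IsRow n (cut n r) := by
  refine ⟨hne, hr.pairwise.filter _, fun x hx => ?_⟩
  simp only [ColoredImm.cut, List.mem_filter, decide_eq_true_eq] at hx
  exact Finset.mem_Icc.2 ⟨(Finset.mem_Icc.1 (hr.mem_Icc x hx.1)).1, hx.2⟩

lemma head?_cut (hr : IsRow (n + 1) r) (hne : ColoredImm.cut n r ≠ []) :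
    (ColoredImm.cut n r).head? = r.head? := by
  conv_rhs => rw [← hr.cut_append]
  rw [List.head?_append_of_ne_nil _ hne]

lemma headLT_cut_right_iff (hr : IsRow n r) (hs : IsRow (n + 1) s) :
    HeadLT r (ColoredImm.cut n s) ↔ HeadLT r s := by
  by_cases hnil : ColoredImm.cut n s = []
  · refine iff_of_true (hnil ▸ headLT_nil_right r) fun x hx y hy => ?_
    exact (hr.le (List.mem_of_mem_head? hx)).trans_lt
      (lt_of_cut_eq_nil hnil (List.mem_of_mem_head? hy))
  · rw [HeadLT, HeadLT, hs.head?_cut hnil]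

end IsRow

end Rows

lemma strip_cons_of_cut_eq_nil {n : ℕ} {r : Row A} (hr : cut n r = []) (T : Tableau A) :
    strip n (r :: T) = strip n T := by
  simp [strip, hr]

lemma strip_cons_of_cut_ne_nil {n : ℕ} {r : Row A} (hr : cut n r ≠ []) (T : Tableau A) :
    strip n (r :: T) = cut n r :: strip n T := by
  simp [strip, hr]

namespace IsTableau

variable {n : ℕ} {r : Row A} {T : Tableau A}

lemma eq_nil_of_cut_eq_nil (h : IsTableau (n + 1) (r :: T)) (hr : cut n r = []) : T = [] := by
  obtain ⟨hrow, hlt, hT⟩ := isTableau_cons.1 h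
  refine List.eq_nil_iff_forall_not_mem.2 fun s hs => ?_
  obtain ⟨x, r, rfl⟩ := List.exists_cons_of_ne_nil hrow.ne_nil
  obtain ⟨y, s, rfl⟩ := List.exists_cons_of_ne_nil (hT.isRow s hs).ne_nil
  have hxy : x.2 < y.2 := hlt _ hs x rfl y rfl
  have hx : n < x.2 := lt_of_cut_eq_nil hr List.mem_cons_self
  have hy : y.2 ≤ n + 1 := (hT.isRow _ hs).le List.mem_cons_self
  omega

lemma forall_headLT_strip_iff (hT : IsTableau (n + 1) T) (hr : IsRow n r) :
    (∀ s ∈ strip n T, HeadLT r s) ↔ ∀ s ∈ T, HeadLT r s := by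
  constructor
  · intro h s hs
    rw [← hr.headLT_cut_right_iff (hT.isRow s hs)]
    by_cases hnil : cut n s = []
    · exact hnil ▸ headLT_nil_right r
    · exact h _ (mem_strip.2 ⟨⟨s, hs, rfl⟩, hnil⟩)
  · rintro h t ht
    obtain ⟨⟨s, hs, rfl⟩, -⟩ := mem_strip.1 ht
    exact (hr.headLT_cut_right_iff (hT.isRow s hs)).2 (h s hs)

protected lemma strip (hT : IsTableau (n + 1) T) : IsTableau n (strip n T) := by
  induction T with
  | nil => exact isTableau_nil n
  | cons r T ih =>
    by_cases hnil : cut n r = []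
    · rw [hT.eq_nil_of_cut_eq_nil hnil, strip_cons_of_cut_eq_nil hnil]
      exact isTableau_nil n
    · obtain ⟨hr, hlt, hT⟩ := isTableau_cons.1 hT
      rw [strip_cons_of_cut_ne_nil hnil]
      refine isTableau_cons.2 ⟨hr.cut hnil, ?_, ih hT⟩
      rw [hT.forall_headLT_strip_iff (hr.cut hnil)]
      intro s hs
      rw [← headLT_append_left_iff hnil, hr.cut_append]
      exact hlt s hs

lemma size_shape (hT : IsTableau (n + 1) T) :
    size (shape T) = size (shape (strip n T)) + (typeWordAt (n + 1) T).length := by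
  induction T with
  | nil => rfl
  | cons r T ih =>
    obtain ⟨hr, -, hT⟩ := isTableau_cons.1 hT
    have hlength : r.length = (cut n r).length + (rowWord (n + 1) r).length := by
      conv_lhs => rw [← hr.cut_append]
      simp [constRow]
    have hstrip : size (shape (strip n (r :: T))) =
        (cut n r).length + size (shape (strip n T)) := by
      by_cases hnil : cut n r = []
      · simp [strip_cons_of_cut_eq_nil hnil, hnil]
      · simp [strip_cons_of_cut_ne_nil hnil, size, shape]
    have hsize : size (shape (r :: T)) = r.length + size (shape T) := by simp [size, shape]
    rw [hsize, hstrip, typeWordAt_cons, List.length_append, ih hT, hlength]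
    omega

end IsTableau

end Tableaux

section Extensions

variable {A : Type*} {n : ℕ}

/-- The tableaux obtained from `T`, whose entries are at most `n`, by adding boxes with entry
`n + 1` whose colors read `w`. -/
def extensions (n : ℕ) (T : Tableau A) (w : List A) : Set (Tableau A) :=
  {T' | IsTableau (n + 1) T' ∧ strip n T' = T ∧ typeWordAt (n + 1) T' = w}

lemma isTableau_singleton_constRow {w : List A} (hw : w ≠ []) :
    IsTableau (n + 1) [constRow (n + 1) w] := by
  refine isTableau_cons.2 ⟨⟨by simpa [constRow] using hw, ?_, ?_⟩, by simp, isTableau_nil _⟩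
  · simp [constRow, List.pairwise_map, List.pairwise_of_forall]
  · simp [constRow]

lemma extensions_nil (w : List A) :
    extensions n [] w = {(flattenWS [w]).map (constRow (n + 1))} := by
  ext T
  rw [Set.mem_singleton_iff]
  constructor
  · rintro ⟨hT, hstrip, rfl⟩
    cases T with
    | nil => rfl
    | cons r T =>
      have hnil : cut n r = [] := by
        by_contra hne
        simp [strip_cons_of_cut_ne_nil hne] at hstrip
      obtain rfl := hT.eq_nil_of_cut_eq_nil hnil
      have hr := (isTableau_cons.1 hT).1
      have hconst : constRow (n + 1) (rowWord (n + 1) r) = r := by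
        conv_rhs => rw [← hr.cut_append, hnil, List.nil_append]
      have hword : rowWord (n + 1) r ≠ [] := fun h => hr.ne_nil (by rw [← hconst, h]; rfl)
      simp [typeWordAt, flattenWS, hword, hconst]
  · rintro rfl
    by_cases hw : w = []
    · subst hw
      exact ⟨isTableau_nil _, rfl, rfl⟩
    · have hflatten : (flattenWS [w]).map (constRow (n + 1)) = [constRow (n + 1) w] := by
        simp [flattenWS, hw]
      rw [hflatten]
      refine ⟨isTableau_singleton_constRow hw, ?_, ?_⟩
      · exact strip_cons_of_cut_eq_nil (cut_append_constRow (r := []) (by simp) w) []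
      · rw [typeWordAt_cons]
        exact rowWord_append_constRow (r := []) (by simp) w

lemma cons_mem_extensions {r : Row A} {T T' : Tableau A} (hT : IsTableau n (r :: T))
    {a b : List A} (hT' : T' ∈ extensions n T a) :
    (r ++ constRow (n + 1) b) :: T' ∈ extensions n (r :: T) (a ++ b) := by
  obtain ⟨hr, hlt, -⟩ := isTableau_cons.1 hT
  obtain ⟨hT', rfl, rfl⟩ := hT'
  have hcut : cut n (r ++ constRow (n + 1) b) = r := cut_append_constRow (fun _ => hr.le) b
  refine ⟨isTableau_cons.2 ⟨hr.append_constRow b, fun s hs => ?_, hT'⟩, ?_, ?_⟩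
  · rw [headLT_append_left_iff hr.ne_nil]
    exact (hT'.forall_headLT_strip_iff hr).1 hlt s hs
  · rw [strip_cons_of_cut_ne_nil (hcut.symm ▸ hr.ne_nil), hcut]
  · rw [typeWordAt_cons, rowWord_append_constRow fun _ => hr.le]

lemma exists_of_mem_extensions_cons {r : Row A} {T U : Tableau A} {w : List A}
    (hU : U ∈ extensions n (r :: T) w) :
    ∃ p ∈ splits w, ∃ T' ∈ extensions n T p.1, (r ++ constRow (n + 1) p.2) :: T' = U := by
  obtain ⟨hU, hstrip, rfl⟩ := hU
  cases U with
  | nil => cases hstrip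
  | cons s T' =>
    have hne : cut n s ≠ [] := fun hnil => by
      rw [hU.eq_nil_of_cut_eq_nil hnil, strip_cons_of_cut_eq_nil hnil] at hstrip
      cases hstrip
    rw [strip_cons_of_cut_ne_nil hne] at hstrip
    obtain ⟨rfl, rfl⟩ := List.cons.inj hstrip
    obtain ⟨hs, -, hT'⟩ := isTableau_cons.1 hU
    exact ⟨(typeWordAt (n + 1) T', rowWord (n + 1) s), mem_splits.2 (typeWordAt_cons ..).symm,
      T', ⟨hT', rfl, rfl⟩, by rw [hs.cut_append]⟩

lemma extensions_cons {r : Row A} {T : Tableau A} (hT : IsTableau n (r :: T)) (w : List A) :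
    extensions n (r :: T) w =
      ⋃ p ∈ (splits w : Set (List A × List A)),
        ((r ++ constRow (n + 1) p.2) :: ·) '' extensions n T p.1 := by
  ext U
  simp only [Set.mem_iUnion, Set.mem_image, Finset.mem_coe, exists_prop]
  constructor
  · exact exists_of_mem_extensions_cons
  · rintro ⟨p, hp, T', hT', rfl⟩
    exact mem_splits.1 hp ▸ cons_mem_extensions hT hT'

lemma finite_extensions {T : Tableau A} (hT : IsTableau n T) (w : List A) :
    (extensions n T w).Finite := by
  induction T generalizing w with
  | nil => exact extensions_nil (n := n) w ▸ Set.finite_singleton _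
  | cons r T ih =>
    rw [extensions_cons hT]
    exact (splits w).finite_toSet.biUnion fun p _ => (ih (isTableau_cons.1 hT).2.2 p.1).image _

lemma pairwiseDisjoint_extensions (T : Tableau A) (w : List A) (r : Row A) :
    (splits w : Set (List A × List A)).PairwiseDisjoint
      fun p => ((r ++ constRow (n + 1) p.2) :: ·) '' extensions n T p.1 := by
  intro p _ q _ hpq
  refine Set.disjoint_left.2 ?_
  rintro _ ⟨T', hT', rfl⟩ ⟨T'', hT'', heq⟩
  obtain ⟨hrow, rfl⟩ := List.cons.inj heq
  refine hpq (Prod.ext (hT'.2.2.symm.trans hT''.2.2) ?_)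
  have hinj : Function.Injective fun a : A => (a, n + 1) := fun a b h => (Prod.mk.inj h).1
  exact (hinj.list_map (List.append_cancel_left hrow)).symm

lemma ImmS_mem_nsym (J : Sentence A) : ImmS J ∈ nsym A := by
  induction J with
  | nil => exact Hd_mem_nsym (List.forall_mem_nil _)
  | cons v J ih => exact Bern_mem_nsym v ih

lemma ImmS_shape_constRow (w : List A) :
    ImmS (shape ((flattenWS [w]).map (constRow n))) = Hw w := by
  by_cases hw : w = []
  · simp [hw, flattenWS, shape, ImmS, Hw]
  · have hshape : shape ((flattenWS [w]).map (constRow n)) = [w] := by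
      simp [flattenWS, hw, shape, constRow, Function.comp_def]
    rw [hshape]
    exact Bern_Hd_nil w

theorem mulN_ImmS_shape_Hw {T : Tableau A} (hT : IsTableau n T) (w : List A) :
    mulN (ImmS (shape T)) (Hw w) = ∑ᶠ T' ∈ extensions n T w, ImmS (shape T') := by
  induction T generalizing w with
  | nil =>
    rw [extensions_nil, finsum_mem_singleton, ImmS_shape_constRow, Hw_eq_Hd_flattenWS]
    exact mulN_Hd_Hd _ _
  | cons r T ih =>
    have hfinite : ∀ v, (extensions n T v).Finite := finite_extensions (isTableau_cons.1 hT).2.2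
    have hImmS : ImmS (shape (r :: T)) = Bern (r.map Prod.fst) (ImmS (shape T)) := rfl
    rw [extensions_cons hT, finsum_mem_biUnion (pairwiseDisjoint_extensions T w r)
      (splits w).finite_toSet fun p _ => (hfinite p.1).image _, finsum_mem_coe_finset, hImmS,
      mulN_Bern_Hw _ (ImmS_mem_nsym _)]
    refine Finset.sum_congr rfl fun p _ => ?_
    rw [ih (isTableau_cons.1 hT).2.2, Bern_finsum_mem _ (hfinite _) fun _ => ImmS_mem_nsym _,
      finsum_mem_image List.cons_injective.injOn]
    simp [shape, constRow, ImmS, Function.comp_def]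

end Extensions

section TableauxOfType

variable {A : Type*} {n : ℕ} {T : Tableau A}

/-- The colored immaculate tableaux, of arbitrary shape, whose type is `C`. -/
def tableauxOfType (C : Sentence A) : Set (Tableau A) :=
  {T | IsTableau C.length T ∧ ∀ i, typeWordAt (i + 1) T = C.getD i []}

lemma typeWordAt_strip {i : ℕ} (hi : i ≤ n) (T : Tableau A) :
    typeWordAt i (strip n T) = typeWordAt i T := by
  have hcut : ∀ r : Row A, rowWord i (cut n r) = rowWord i r := fun r => by
    rw [rowWord, cut, List.filter_filter, rowWord]
    congr 1
    refine List.filter_congr fun x _ => ?_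
    rw [← Bool.decide_and, decide_eq_decide]
    omega
  induction T with
  | nil => rfl
  | cons r T ih =>
    by_cases hnil : cut n r = []
    · rw [strip_cons_of_cut_eq_nil hnil, typeWordAt_cons, ih, ← hcut r, hnil]
      simp [rowWord]
    · rw [strip_cons_of_cut_ne_nil hnil, typeWordAt_cons, typeWordAt_cons, ih, hcut]

lemma IsTableau.typeWordAt_eq_nil (hT : IsTableau n T) {i : ℕ} (hi : n < i) :
    typeWordAt i T = [] := by
  refine List.eq_nil_iff_forall_not_mem.2 fun a ha => ?_
  obtain ⟨r, hr, har⟩ := mem_typeWordAt.1 ha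
  exact hi.not_ge ((hT.isRow r hr).le har)

lemma IsTableau.isSentence_shape (hT : IsTableau n T) : IsSentence (shape T) := by
  intro w hw
  obtain ⟨r, hr, rfl⟩ := List.mem_map.1 hw
  simpa using (hT.isRow r hr).ne_nil

lemma tableauxOfType_nil : tableauxOfType ([] : Sentence A) = {[]} := by
  ext T
  rw [Set.mem_singleton_iff]
  constructor
  · rintro ⟨hT, -⟩
    refine List.eq_nil_iff_forall_not_mem.2 fun r hr => (hT.isRow r hr).ne_nil ?_
    refine List.eq_nil_iff_forall_not_mem.2 fun x hx => ?_
    simpa using (hT.isRow r hr).mem_Icc x hx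
  · rintro rfl
    exact ⟨isTableau_nil _, fun i => rfl⟩

lemma tableauxOfType_append_singleton (C : Sentence A) (w : List A) :
    tableauxOfType (C ++ [w]) = ⋃ T ∈ tableauxOfType C, extensions C.length T w := by
  have hlast : (C ++ [w]).getD C.length [] = w := by simp
  ext T
  simp only [Set.mem_iUnion, exists_prop]
  constructor
  · rintro ⟨hT, htype⟩
    rw [List.length_append, List.length_singleton] at hT
    refine ⟨strip C.length T, ⟨hT.strip, fun i => ?_⟩, hT, rfl, (htype _).trans hlast⟩
    rcases lt_or_ge i C.length with hi | hi
    · rw [typeWordAt_strip hi, htype, List.getD_append _ _ _ _ hi]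
    · rw [hT.strip.typeWordAt_eq_nil (Nat.lt_succ_of_le hi), List.getD_eq_default _ _ hi]
  · rintro ⟨_, ⟨-, htype⟩, hT, rfl, hw⟩
    refine ⟨by simpa using hT, fun i => ?_⟩
    rcases lt_trichotomy i C.length with hi | rfl | hi
    · rw [← typeWordAt_strip hi, htype, List.getD_append _ _ _ _ hi]
    · rw [hw, hlast]
    · rw [hT.typeWordAt_eq_nil (Nat.succ_lt_succ hi), List.getD_eq_default]
      simpa using hi

lemma finite_tableauxOfType (C : Sentence A) : (tableauxOfType C).Finite := by
  induction C using List.reverseRecOn with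
  | nil => exact tableauxOfType_nil (A := A) ▸ Set.finite_singleton _
  | append_singleton C w ih =>
    rw [tableauxOfType_append_singleton]
    exact ih.biUnion fun T hT => finite_extensions hT.1 w

lemma size_shape_of_mem_tableauxOfType {C : Sentence A} (hT : T ∈ tableauxOfType C) :
    size (shape T) = size C := by
  induction C using List.reverseRecOn generalizing T with
  | nil =>
    rw [tableauxOfType_nil] at hT
    rw [hT]
    rfl
  | append_singleton C w ih =>
    simp only [tableauxOfType_append_singleton, Set.mem_iUnion, exists_prop] at hT
    obtain ⟨_, hstrip, hT, rfl, rfl⟩ := hT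
    rw [hT.size_shape, ih hstrip]
    simp [size]

theorem Hd_eq_finsum_tableauxOfType {C : Sentence A} (hC : IsSentence C) :
    Hd C = ∑ᶠ T ∈ tableauxOfType C, ImmS (shape T) := by
  induction C using List.reverseRecOn with
  | nil => rw [tableauxOfType_nil, finsum_mem_singleton]; rfl
  | append_singleton C w ih =>
    obtain ⟨hC, hw⟩ := isSentence_append.1 hC
    have hmul : Hd (C ++ [w]) = mulN (Hd C) (Hw w) := by
      rw [Hw, if_neg (by simpa using hw w (by simp)), mulN_Hd_Hd]
    have hdisjoint : (tableauxOfType C).PairwiseDisjoint (extensions C.length · w) :=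
      fun T _ T' _ hne => Set.disjoint_left.2 fun U hU hU' => hne (hU.2.1.symm.trans hU'.2.1)
    rw [hmul, ih hC, tableauxOfType_append_singleton,
      finsum_mem_biUnion hdisjoint (finite_tableauxOfType C) fun T hT => finite_extensions hT.1 w]
    refine ((mulNBilin.flip (Hw w)).toAddMonoidHom.map_finsum_mem _
      (finite_tableauxOfType C)).trans (finsum_mem_congr rfl fun T hT => ?_)
    exact mulN_ImmS_shape_Hw hT.1 w

end TableauxOfType

section Fillings

variable {A : Type*}

lemma zip_map_fst_map_snd {α β : Type*} (l : List (α × β)) :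
    (l.map Prod.fst).zip (l.map Prod.snd) = l := by
  rw [List.zip_map', List.map_id'']
  simp

lemma typeWord_shape_entries (T : Tableau A) (n : ℕ) :
    typeWord (shape T) (entries T) n = typeWordAt n T := by
  rw [typeWord, typeWordAt, shape, entries, List.zip_map', ← List.map_reverse, List.map_map]
  congr 2
  funext r
  simp only [Function.comp_apply, rowWith, rowWord, zip_map_fst_map_snd, beq_eq_decide]

lemma isChain_filterMap_head?_entries_iff (T : Tableau A) :
    ((entries T).filterMap List.head?).IsChain (· < ·) ↔ T.Pairwise HeadLT := by
  rw [List.isChain_iff_pairwise, List.pairwise_filterMap, entries, List.pairwise_map]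
  refine iff_of_eq (congrArg (T.Pairwise ·) ?_)
  funext r s
  simp only [HeadLT, List.head?_map, Option.map_eq_some_iff, Option.mem_def,
    forall_exists_index, and_imp, forall_apply_eq_imp_iff₂]

lemma isCIT_shape_entries_iff (T : Tableau A) :
    IsCIT (shape T) (entries T) ↔
      (∀ r ∈ T, r.Pairwise (·.2 ≤ ·.2)) ∧ T.Pairwise HeadLT ∧ ∀ r ∈ T, ∀ x ∈ r, 1 ≤ x.2 := by
  have hlength : (entries T).map List.length = (shape T).map List.length := by
    simp [entries, shape, Function.comp_def]
  have hrows : (∀ row ∈ entries T, row.IsChain (· ≤ ·)) ↔ ∀ r ∈ T, r.Pairwise (·.2 ≤ ·.2) := by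
    simp only [entries, List.forall_mem_map, List.isChain_iff_pairwise, List.pairwise_map]
  have hpos : (∀ x ∈ (entries T).flatten, 1 ≤ x) ↔ ∀ r ∈ T, ∀ x ∈ r, 1 ≤ x.2 := by
    simp only [entries, List.forall_mem_flatten, List.forall_mem_map]
  rw [← hrows, ← hpos, ← isChain_filterMap_head?_entries_iff]
  exact and_iff_right hlength

lemma le_length_of_hasType {C : Sentence A} {T : Tableau A}
    (hT : HasType (shape T) (entries T) C) {r : Row A} (hr : r ∈ T) {x : A × ℕ} (hx : x ∈ r)
    (hpos : 1 ≤ x.2) : x.2 ≤ C.length := by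
  by_contra! hlt
  have hword := hT x.2 hpos
  rw [typeWord_shape_entries, List.getD_eq_default _ _ (Nat.le_sub_one_of_lt hlt)] at hword
  exact List.ne_nil_of_mem (mem_typeWordAt.2 ⟨r, hr, hx⟩) hword

lemma mem_tableauxOfType_iff {C : Sentence A} {T : Tableau A} (hT : IsSentence (shape T)) :
    T ∈ tableauxOfType C ↔
      IsCIT (shape T) (entries T) ∧ HasType (shape T) (entries T) C := by
  rw [isCIT_shape_entries_iff]
  constructor
  · rintro ⟨hT, htype⟩
    refine ⟨⟨fun r hr => (hT.isRow r hr).pairwise, hT.pairwise, fun r hr x hx =>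
      (Finset.mem_Icc.1 ((hT.isRow r hr).mem_Icc x hx)).1⟩, fun i hi => ?_⟩
    rw [typeWord_shape_entries, ← htype, Nat.sub_add_cancel hi]
  · rintro ⟨⟨hrows, hheads, hpos⟩, htype⟩
    refine ⟨⟨fun r hr => ⟨?_, hrows r hr, fun x hx => ?_⟩, hheads⟩, fun i => ?_⟩
    · simpa using hT _ (List.mem_map_of_mem hr)
    · exact Finset.mem_Icc.2 ⟨hpos r hr x hx, le_length_of_hasType htype hr hx (hpos r hr x hx)⟩
    · rw [← typeWord_shape_entries, htype (i + 1) i.succ_pos, Nat.add_sub_cancel]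

lemma zipWith_zip_shape_entries (T : Tableau A) :
    List.zipWith List.zip (shape T) (entries T) = T := by
  simp [shape, entries, List.zipWith_map, List.zipWith_self, zip_map_fst_map_snd]

lemma shape_zipWith_zip {J : Sentence A} {f : Filling}
    (h : f.map List.length = J.map List.length) : shape (List.zipWith List.zip J f) = J := by
  induction J generalizing f with
  | nil => rfl
  | cons w J ih =>
    obtain ⟨row, f, rfl⟩ := List.exists_cons_of_ne_nil (l := f) (by rintro rfl; simp at h)
    obtain ⟨hrow, hf⟩ := List.cons.inj h
    exact congrArg₂ List.cons (List.map_fst_zip hrow.ge) (ih hf)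

lemma entries_zipWith_zip {J : Sentence A} {f : Filling}
    (h : f.map List.length = J.map List.length) : entries (List.zipWith List.zip J f) = f := by
  induction J generalizing f with
  | nil => exact (List.map_eq_nil_iff.1 h).symm
  | cons w J ih =>
    obtain ⟨row, f, rfl⟩ := List.exists_cons_of_ne_nil (l := f) (by rintro rfl; simp at h)
    obtain ⟨hrow, hf⟩ := List.cons.inj h
    exact congrArg₂ List.cons (List.map_snd_zip hrow.le) (ih hf)

lemma KJB_eq_ncard {J : Sentence A} (hJ : IsSentence J) (C : Sentence A) :
    KJB J C = {T ∈ tableauxOfType C | shape T = J}.ncard := by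
  symm
  refine Set.ncard_congr (fun T _ => entries T) ?_ ?_ ?_
  · rintro T ⟨hT, rfl⟩
    exact (mem_tableauxOfType_iff hJ).1 hT
  · rintro T T' ⟨-, hT⟩ ⟨-, hT'⟩ hentries
    rw [← zipWith_zip_shape_entries T, ← zipWith_zip_shape_entries T', hT, hT', hentries]
  · rintro f ⟨hcit, htype⟩
    have hshape := shape_zipWith_zip hcit.1
    have hentries := entries_zipWith_zip hcit.1
    refine ⟨List.zipWith List.zip J f, ⟨?_, hshape⟩, hentries⟩
    rw [mem_tableauxOfType_iff (hshape.symm ▸ hJ), hshape, hentries]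
    exact ⟨hcit, htype⟩

end Fillings

/-- The colored complete homogeneous function expands positively into
the colored immaculate basis: `H_C = Σ_J K_{J,C} 𝔖_J`, summed over all sentences `J` with
`|J| = |C|`. -/
theorem statement13 {A : Type*} (C : Sentence A) (hC : IsSentence C) :
    Hd C =
      ∑ᶠ J ∈ {J : Sentence A | IsSentence J ∧ size J = size C}, (KJB J C : ℚ) • ImmS J := by
  have hmaps : Set.MapsTo shape (tableauxOfType C)
      {J : Sentence A | IsSentence J ∧ size J = size C} :=
    fun T hT => ⟨hT.1.isSentence_shape, size_shape_of_mem_tableauxOfType hT⟩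
  calc
    Hd C = ∑ᶠ T ∈ tableauxOfType C, ImmS (shape T) := Hd_eq_finsum_tableauxOfType hC
    _ = ∑ᶠ J ∈ {J : Sentence A | IsSentence J ∧ size J = size C},
          {T ∈ tableauxOfType C | shape T = J}.ncard • ImmS J :=
      finsum_mem_comp_eq_finsum_mem_ncard_nsmul (finite_tableauxOfType C) hmaps ImmS
    _ = _ := finsum_mem_congr rfl fun J hJ => by
      rw [← KJB_eq_ncard hJ.1, Nat.cast_smul_eq_nsmul]

end ColoredImm
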